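/- A BIBS system is IOS if and only if there exist a smooth function V : ℝⁿ → [0,∞), class-K∞ functions α₁, α₂ and a class-K function χ such that α₁(|h(ξ)|) ≤ V(ξ) ≤ α₂(|ξ|) for all ξ ∈ ℝⁿ, and V(ξ) > χ(|μ|) implies ∇V(ξ)·f(ξ,μ) < 0, for all ξ ∈ ℝⁿ and all μ ∈ ℝᵐ. -/

import Mathlib

open MeasureTheory Set Filter Topology
open scoped ENNReal NNReal

noncomputable section

/-- A function of class `K`: continuous, strictly increasing on `[0,∞)` and vanishing at `0`. -/
def IsClassK (α : ℝ → ℝ) : Prop :=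
  ContinuousOn α (Ici 0) ∧ StrictMonoOn α (Ici 0) ∧ α 0 = 0

/-- A function of class `K∞`: class `K` and unbounded. -/
def IsClassKInfty (α : ℝ → ℝ) : Prop :=
  IsClassK α ∧ Tendsto α atTop atTop

/-- A function of class `KL`. -/
def IsClassKL (β : ℝ → ℝ → ℝ) : Prop :=
  (∀ t ∈ Ici (0:ℝ), IsClassK fun s => β s t) ∧
  ∀ s ∈ Ici (0:ℝ), AntitoneOn (fun t => β s t) (Ici 0) ∧
    Tendsto (fun t => β s t) atTop (𝓝 0)

/-- Admissible inputs: measurable and locally essentially bounded on `[0,∞)`. -/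
def IsInput {m : ℕ} (u : ℝ → EuclideanSpace ℝ (Fin m)) : Prop :=
  Measurable u ∧ ∀ T > (0:ℝ), ∃ C : ℝ, ∀ᵐ t ∂(volume.restrict (Icc 0 T)), ‖u t‖ ≤ C

/-- The essential supremum norm of an input over `[0,∞)`, as an extended nonnegative real. -/
def uNormE {m : ℕ} (u : ℝ → EuclideanSpace ℝ (Fin m)) : ℝ≥0∞ :=
  essSup (fun t => (‖u t‖₊ : ℝ≥0∞)) (volume.restrict (Ici 0))

/-- An input which is (globally) essentially bounded on `[0,∞)`. -/
def BddInput {m : ℕ} (u : ℝ → EuclideanSpace ℝ (Fin m)) : Prop := uNormE u ≠ ⊤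

/-- The essential supremum norm `‖u‖` of an input, as a real number. -/
def uNorm {m : ℕ} (u : ℝ → EuclideanSpace ℝ (Fin m)) : ℝ := (uNormE u).toReal

/-- `x` is the solution map of the forward-complete system `ẋ = f(x,u)`:
for every initial state `ξ` and admissible input `u`, `t ↦ x t ξ u` solves the corresponding
integral equation on all of `[0,∞)`. -/
def IsSolutionMap {n m : ℕ}
    (f : EuclideanSpace ℝ (Fin n) → EuclideanSpace ℝ (Fin m) → EuclideanSpace ℝ (Fin n))
    (x : ℝ → EuclideanSpace ℝ (Fin n) → (ℝ → EuclideanSpace ℝ (Fin m)) →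
      EuclideanSpace ℝ (Fin n)) : Prop :=
  ∀ ξ u, IsInput u → ∀ t ∈ Ici (0:ℝ),
    x t ξ u = ξ + ∫ s in (0:ℝ)..t, f (x s ξ u) (u s)

/-- The system is bounded-input bounded-state (BIBS): it is forward complete (encoded by the
solution-map property) and trajectories are bounded in terms of a class-`K` function of the
initial state and of the input norm. -/
def IsBIBS {n m : ℕ}
    (f : EuclideanSpace ℝ (Fin n) → EuclideanSpace ℝ (Fin m) → EuclideanSpace ℝ (Fin n))
    (x : ℝ → EuclideanSpace ℝ (Fin n) → (ℝ → EuclideanSpace ℝ (Fin m)) →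
      EuclideanSpace ℝ (Fin n)) : Prop :=
  IsSolutionMap f x ∧ ∃ σ : ℝ → ℝ, IsClassK σ ∧ ∀ ξ u, IsInput u → BddInput u →
    ∀ t ∈ Ici (0:ℝ), ‖x t ξ u‖ ≤ max (σ ‖ξ‖) (σ (uNorm u))

/-- Input-to-output stability (IOS). -/
def IsIOS {n m p : ℕ}
    (h : EuclideanSpace ℝ (Fin n) → EuclideanSpace ℝ (Fin p))
    (x : ℝ → EuclideanSpace ℝ (Fin n) → (ℝ → EuclideanSpace ℝ (Fin m)) →
      EuclideanSpace ℝ (Fin n)) : Prop :=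
  ∃ β γ, IsClassKL β ∧ IsClassK γ ∧ ∀ ξ u, IsInput u → BddInput u →
    ∀ t ∈ Ici (0:ℝ), ‖h (x t ξ u)‖ ≤ max (β ‖ξ‖ t) (γ (uNorm u))

/-!
**Sufficiency.** By compactness, on bounded sets of states and inputs `V` decays at a uniform
rate as long as it is at least `max ε (2 * χ ‖u‖)`. Hence `V` falls to that level in a time uniform
over bounded sets, and such uniform attractivity together with `V ≤ α₂` is the same as a
class-`KL` bound up to a gain; `α₁` transfers the bound to the output.

**Necessity.** Let `W ξ` be the supremum, over all `t ≥ 0` and all bounded inputs, of the excess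
of the output over the gain of the input, multiplied by a weight which increases with `t`. When
`W ξ` is large compared with `γ ‖μ‖`, following the constant input `μ` only loses part of the
supremum, and the shift of time in the increasing weight makes the loss strict. On a set where `W`
stays away from `0` the decay of `β` leaves only a bounded time horizon, on which the flow is
Lipschitz in the state, so `W` is locally Lipschitz off its zero set. Averaging `W` over balls of
smoothly varying radius then gives a function smooth off the zero set that still decreases along
`f`, provided that both the radius and its gradient are small compared with the local Lipschitz
constant and decay rate. Finally, composing with a class-`K∞` function that is sufficiently flat
at `0` makes it smooth everywhere.
-/

/-! ### Comparison functions -/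

theorem IsClassK.nonneg {α : ℝ → ℝ} (hα : IsClassK α) {s : ℝ} (hs : 0 ≤ s) : 0 ≤ α s := by
  have := hα.2.1.monotoneOn self_mem_Ici hs hs
  rwa [hα.2.2] at this

theorem IsClassK.pos {α : ℝ → ℝ} (hα : IsClassK α) {s : ℝ} (hs : 0 < s) : 0 < α s := by
  have := hα.2.1 self_mem_Ici hs.le hs
  rwa [hα.2.2] at this

theorem IsClassK.mono {α : ℝ → ℝ} (hα : IsClassK α) {s t : ℝ} (hs : 0 ≤ s) (hst : s ≤ t) :
    α s ≤ α t :=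
  hα.2.1.monotoneOn hs (hs.trans hst) hst

theorem IsClassK.add {α β : ℝ → ℝ} (hα : IsClassK α) (hβ : IsClassK β) :
    IsClassK fun s => α s + β s :=
  ⟨hα.1.add hβ.1, fun _ hs _ ht hst => add_lt_add (hα.2.1 hs ht hst) (hβ.2.1 hs ht hst), by
    simp [hα.2.2, hβ.2.2]⟩

theorem IsClassK.const_mul {α : ℝ → ℝ} (hα : IsClassK α) {c : ℝ} (hc : 0 < c) :
    IsClassK fun s => c * α s :=
  ⟨continuousOn_const.mul hα.1,
    fun _ hs _ ht hst => mul_lt_mul_of_pos_left (hα.2.1 hs ht hst) hc, by simp [hα.2.2]⟩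

theorem IsClassK.comp {α β : ℝ → ℝ} (hα : IsClassK α) (hβ : IsClassK β) :
    IsClassK fun s => α (β s) :=
  ⟨hα.1.comp hβ.1 fun _ hs => hβ.nonneg hs,
    fun _ hs _ ht hst => hα.2.1 (hβ.nonneg hs) (hβ.nonneg ht) (hβ.2.1 hs ht hst), by
    simp [hα.2.2, hβ.2.2]⟩

theorem isClassK_id : IsClassK fun s => s :=
  ⟨continuousOn_id, fun _ _ _ _ h => h, rfl⟩

theorem IsClassK.add_id {α : ℝ → ℝ} (hα : IsClassK α) : IsClassKInfty fun s => α s + s :=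
  ⟨hα.add isClassK_id, tendsto_atTop_mono' _
    ((eventually_ge_atTop 0).mono fun _ hs => le_add_of_nonneg_left (hα.nonneg hs)) tendsto_id⟩

theorem IsClassKInfty.exists_orderIso {α : ℝ → ℝ} (hα : IsClassKInfty α) :
    ∃ e : ℝ ≃o ℝ, ∀ s, 0 ≤ s → e s = α s := by
  -- Extend `α` by the identity on the negative half-line.
  let F : ℝ → ℝ := fun s => α (max s 0) + min s 0
  have F_nonneg : ∀ s, 0 ≤ s → F s = α s := fun s hs => by simp [F, hs]
  have F_nonpos : ∀ s, s ≤ 0 → F s = s := fun s hs => by simp [F, hs, hα.1.2.2]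
  have F_strictMono : StrictMono F := by
    refine StrictMonoOn.Iic_union_Ici (a := 0) (fun a ha b hb hab => ?_) fun a ha b hb hab => ?_
    · rwa [F_nonpos a ha, F_nonpos b hb]
    · rw [F_nonneg a ha, F_nonneg b hb]
      exact hα.1.2.1 ha hb hab
  have F_continuous : Continuous F :=
    (hα.1.1.comp_continuous (by fun_prop) fun _ => mem_Ici.2 (le_max_right _ _)).add (by fun_prop)
  have F_surjective : Function.Surjective F := F_continuous.surjective
    (hα.2.congr' ((eventually_ge_atTop 0).mono fun s hs => (F_nonneg s hs).symm))
    (tendsto_id.congr' ((eventually_le_atBot 0).mono fun s hs => (F_nonpos s hs).symm))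
  exact ⟨F_strictMono.orderIsoOfSurjective F F_surjective, F_nonneg⟩

theorem IsClassKInfty.exists_inverse {α : ℝ → ℝ} (hα : IsClassKInfty α) :
    ∃ κ : ℝ → ℝ, IsClassK κ ∧ ∀ y z, 0 ≤ y → α y ≤ z → y ≤ κ z := by
  obtain ⟨e, he⟩ := hα.exists_orderIso
  refine ⟨e.symm, ⟨e.symm.continuous.continuousOn, e.symm.strictMono.strictMonoOn _, ?_⟩,
    fun y z hy hyz => ?_⟩
  · rw [OrderIso.symm_apply_eq, he 0 le_rfl, hα.1.2.2]
  · rwa [OrderIso.le_symm_apply, he y hy]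

theorem IsClassKL.nonneg {β : ℝ → ℝ → ℝ} (hβ : IsClassKL β) {s t : ℝ} (hs : 0 ≤ s)
    (ht : 0 ≤ t) : 0 ≤ β s t :=
  (hβ.1 t ht).nonneg hs

theorem IsClassKL.mono {β : ℝ → ℝ → ℝ} (hβ : IsClassKL β) {s s' t t' : ℝ} (hs : 0 ≤ s)
    (hss : s ≤ s') (ht : 0 ≤ t) (htt : t ≤ t') : β s t' ≤ β s' t :=
  ((hβ.2 s hs).1 ht (ht.trans htt) htt).trans ((hβ.1 t ht).mono hs hss)

theorem IsClassK.comp_isClassKL {κ : ℝ → ℝ} {β : ℝ → ℝ → ℝ} (hκ : IsClassK κ)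
    (hβ : IsClassKL β) : IsClassKL fun s t => κ (β s t) := by
  refine ⟨fun t ht => hκ.comp (hβ.1 t ht), fun s hs => ⟨fun a ha b hb hab => ?_, ?_⟩⟩
  · exact hκ.mono (hβ.nonneg hs hb) (hβ.mono hs le_rfl ha hab)
  · have hβ0 : Tendsto (β s) atTop (𝓝[Ici 0] 0) := tendsto_nhdsWithin_iff.2
      ⟨(hβ.2 s hs).2, (eventually_ge_atTop 0).mono fun _ ht => hβ.nonneg hs ht⟩
    simpa only [hκ.2.2, Function.comp_def] using (hκ.1 0 self_mem_Ici).tendsto.comp hβ0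

/-- The average of `r ↦ φ (s * r)` over `[1, 2]`. For monotone `φ` it is a function of `s`
that is continuous on `(0,∞)` and squeezed between `φ s` and `φ (s * 2)`. -/
def dilationAverage (φ : ℝ → ℝ) (s : ℝ) : ℝ :=
  ∫ r in (1:ℝ)..2, φ (s * r)

section DilationAverage

variable {φ φ' : ℝ → ℝ} {s s' : ℝ}

theorem intervalIntegrable_comp_mul_of_monotone (hφ : Monotone φ) (hs : 0 ≤ s) (a b : ℝ) :
    IntervalIntegrable (fun r => φ (s * r)) volume a b :=
  (hφ.comp (monotone_mul_left_of_nonneg hs)).intervalIntegrable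

theorem dilationAverage_mono (hφ : Monotone φ) (hφ' : Monotone φ') (hs : 0 ≤ s) (hss : s ≤ s')
    (h : φ ≤ φ') : dilationAverage φ s ≤ dilationAverage φ' s' := by
  refine intervalIntegral.integral_mono_on one_le_two
    (intervalIntegrable_comp_mul_of_monotone hφ hs _ _)
    (intervalIntegrable_comp_mul_of_monotone hφ' (hs.trans hss) _ _) fun r hr => ?_
  exact (hφ (mul_le_mul_of_nonneg_right hss (zero_le_one.trans hr.1))).trans (h _)

theorem le_dilationAverage (hφ : Monotone φ) (hs : 0 ≤ s) : φ s ≤ dilationAverage φ s := by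
  have h : ∫ _ in (1:ℝ)..2, φ s ≤ dilationAverage φ s :=
    intervalIntegral.integral_mono_on one_le_two (by simp)
      (intervalIntegrable_comp_mul_of_monotone hφ hs _ _) fun r hr =>
        hφ (le_mul_of_one_le_right hs hr.1)
  simpa [show (2:ℝ) - 1 = 1 by norm_num] using h

theorem dilationAverage_le (hφ : Monotone φ) (hs : 0 ≤ s) : dilationAverage φ s ≤ φ (s * 2) := by
  have h : dilationAverage φ s ≤ ∫ _ in (1:ℝ)..2, φ (s * 2) :=
    intervalIntegral.integral_mono_on one_le_two
      (intervalIntegrable_comp_mul_of_monotone hφ hs _ _) (by simp) fun r hr =>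
        hφ (mul_le_mul_of_nonneg_left hr.2 hs)
  simpa [show (2:ℝ) - 1 = 1 by norm_num] using h

theorem continuousAt_dilationAverage (hφ : Monotone φ) (hs : 0 < s) :
    ContinuousAt (dilationAverage φ) s := by
  have hφi : ∀ a b, IntervalIntegrable φ volume a b := fun _ _ => hφ.intervalIntegrable
  have h_eq : (fun s => s⁻¹ * ((∫ r in (0 : ℝ)..s * 2, φ r) - ∫ r in (0 : ℝ)..s, φ r))
      =ᶠ[𝓝 s] dilationAverage φ := by
    filter_upwards [eventually_gt_nhds hs] with s hs
    rw [intervalIntegral.integral_interval_sub_left (hφi _ _) (hφi _ _), dilationAverage,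
      intervalIntegral.integral_comp_mul_left φ hs.ne', mul_one, smul_eq_mul]
  have h_prim : Continuous fun b => ∫ r in (0 : ℝ)..b, φ r :=
    intervalIntegral.continuous_primitive hφi 0
  exact ((continuousAt_inv₀ hs.ne').mul
    ((h_prim.comp (continuous_mul_const 2)).sub h_prim).continuousAt).congr h_eq

theorem IsClassK.dilationAverage_add_mul {α : ℝ → ℝ} (hα : IsClassK α) (hφ : Monotone φ)
    (hnn : 0 ≤ φ) (hle : ∀ s, 0 ≤ s → φ s ≤ α s) {c : ℝ} (hc : 0 < c) :
    IsClassK fun s => dilationAverage φ s + s * c := by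
  have h_nonneg : ∀ s, 0 ≤ s → 0 ≤ dilationAverage φ s := fun s hs =>
    (hnn s).trans (le_dilationAverage hφ hs)
  have h_le : ∀ s, 0 ≤ s → dilationAverage φ s ≤ α (s * 2) := fun s hs =>
    (dilationAverage_le hφ hs).trans (hle _ (by positivity))
  have h_zero : dilationAverage φ 0 = 0 :=
    le_antisymm ((h_le 0 le_rfl).trans_eq (by rw [zero_mul, hα.2.2])) (h_nonneg 0 le_rfl)
  refine ⟨ContinuousOn.add (fun s hs => ?_) (by fun_prop), fun a ha b _ hab =>
    add_lt_add_of_le_of_lt (dilationAverage_mono hφ hφ ha hab.le le_rfl)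
      (mul_lt_mul_of_pos_right hab hc), by simp [h_zero]⟩
  rcases (mem_Ici.1 hs).eq_or_lt with rfl | hs_pos
  · have hα_lim : Tendsto (fun s => α (s * 2)) (𝓝[Ici 0] 0) (𝓝 0) := by
      have h := (hα.1.comp (continuousOn_id.mul_const 2)
        fun s hs => mul_nonneg (mem_Ici.1 hs) zero_le_two) 0 self_mem_Ici
      simpa [ContinuousWithinAt, hα.2.2, Function.comp_def] using h
    rw [ContinuousWithinAt, h_zero]
    exact tendsto_of_tendsto_of_tendsto_of_le_of_le' tendsto_const_nhds hα_lim
      (eventually_nhdsWithin_of_forall h_nonneg) (eventually_nhdsWithin_of_forall h_le)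
  · exact (continuousAt_dilationAverage hφ hs_pos).continuousWithinAt

end DilationAverage

theorem exists_isClassKL_ge {ψ : ℝ → ℝ → ℝ} {α : ℝ → ℝ} (hα : IsClassK α)
    (hnn : ∀ s t, 0 ≤ ψ s t) (hle : ∀ s t, 0 ≤ s → 0 ≤ t → ψ s t ≤ α s)
    (hmono : ∀ t, Monotone fun s => ψ s t) (hanti : ∀ s, Antitone fun t => ψ s t)
    (hlim : ∀ s, 0 ≤ s → Tendsto (fun t => ψ s t) atTop (𝓝 0)) :
    ∃ β, IsClassKL β ∧ ∀ s t, 0 ≤ s → 0 ≤ t → ψ s t ≤ β s t := by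
  let A : ℝ → ℝ → ℝ := fun s t => dilationAverage (fun r => ψ r t) s
  have hA : ∀ s t, 0 ≤ s → ψ s t ≤ A s t := fun s t hs => le_dilationAverage (hmono t) hs
  refine ⟨fun s t => A s t + s * Real.exp (-t), ⟨fun t ht => ?_, fun s hs => ⟨?_, ?_⟩⟩, ?_⟩
  · exact hα.dilationAverage_add_mul (hmono t) (fun s => hnn s t) (fun s hs => hle s t hs ht)
      (Real.exp_pos _)
  · intro a _ b _ hab
    exact add_le_add
      (dilationAverage_mono (hmono b) (hmono a) hs le_rfl fun r => hanti r hab)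
      (mul_le_mul_of_nonneg_left (Real.exp_le_exp.2 (neg_le_neg hab)) hs)
  · have hA_lim : Tendsto (A s) atTop (𝓝 0) :=
      tendsto_of_tendsto_of_tendsto_of_le_of_le tendsto_const_nhds
        (hlim (s * 2) (mul_nonneg hs zero_le_two))
        (fun t => (hnn s t).trans (hA s t hs)) fun t => dilationAverage_le (hmono t) hs
    simpa using hA_lim.add (Real.tendsto_exp_neg_atTop_nhds_zero.const_mul s)
  · exact fun s t hs _ => (hA s t hs).trans
      (le_add_of_nonneg_right (mul_nonneg hs (Real.exp_pos _).le))

/-! ### Grönwall and Dini comparison -/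

theorem le_mul_exp_of_le_add_mul_integral {φ : ℝ → ℝ} {A L T : ℝ} (hL : 0 ≤ L)
    (hφ : ContinuousOn φ (Icc 0 T))
    (h : ∀ t ∈ Icc 0 T, φ t ≤ A + L * ∫ s in (0 : ℝ)..t, φ s) {t : ℝ} (ht : t ∈ Icc 0 T) :
    φ t ≤ A * Real.exp (L * t) := by
  let Φ : ℝ → ℝ := fun t => A + L * ∫ s in (0 : ℝ)..t, φ s
  have hT : (0 : ℝ) ≤ T := ht.1.trans ht.2
  have hΦ_cont : ContinuousOn Φ (Icc 0 T) := by
    have hφi : IntegrableOn φ (uIcc 0 T) := by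
      simpa only [uIcc_of_le hT] using hφ.integrableOn_Icc
    have hprim := intervalIntegral.continuousOn_primitive_interval hφi
    rw [uIcc_of_le hT] at hprim
    exact continuousOn_const.add (continuousOn_const.mul hprim)
  have hΦ_deriv : ∀ s ∈ Ico 0 T, HasDerivWithinAt Φ (L * φ s) (Ici s) s := fun s hs => by
    have hIcc : Icc 0 T ∈ 𝓝[>] s :=
      mem_of_superset (Ioc_mem_nhdsGT hs.2) fun r hr => ⟨hs.1.trans hr.1.le, hr.2⟩
    have hφi : IntervalIntegrable φ volume 0 s := ContinuousOn.intervalIntegrable <|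
      hφ.mono (by rw [uIcc_of_le hs.1]; exact Icc_subset_Icc_right hs.2.le)
    exact ((intervalIntegral.integral_hasDerivWithinAt_right hφi
      ⟨Icc 0 T, hIcc, hφ.aestronglyMeasurable measurableSet_Icc⟩
      ((hφ s (Ico_subset_Icc_self hs)).mono_of_mem_nhdsWithin hIcc)).const_mul L).const_add A
  have hΦ_le := le_gronwallBound_of_liminf_deriv_right_le (δ := A) (K := L) (ε := 0) hΦ_cont
    (fun s hs r hr => (hΦ_deriv s hs).liminf_right_slope_le hr) (by simp [Φ])
    (fun s hs => (mul_le_mul_of_nonneg_left (h s (Ico_subset_Icc_self hs)) hL).trans_eq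
      (add_zero _).symm) t ht
  rw [gronwallBound_ε0, sub_zero] at hΦ_le
  exact (h t ht).trans hΦ_le

theorem le_max_sub_of_frequently_decreasing {φ : ℝ → ℝ} {a c : ℝ} (ha : 0 ≤ a)
    (hφ : ContinuousOn φ (Ici 0))
    (h : ∀ t, 0 ≤ t → c ≤ φ t → ∃ᶠ z in 𝓝[>] t, φ z ≤ φ t - a * (z - t)) {t : ℝ} (ht : 0 ≤ t) :
    φ t ≤ max c (φ 0 - a * t) := by
  have hB : Continuous fun t : ℝ => max c (φ 0 - a * t) := by fun_prop
  have hφt : ContinuousOn φ (Icc 0 t) := hφ.mono Icc_subset_Ici_self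
  have hcl : IsClosed ({s | φ s ≤ max c (φ 0 - a * s)} ∩ Icc 0 t) := by
    rw [inter_comm]
    exact isClosed_Icc.isClosed_le hφt hB.continuousOn
  refine hcl.mem_of_ge_of_forall_exists_gt (a := 0) (by simp) ht ?_
  rintro s ⟨hs, hs0, hst⟩
  rw [mem_ofPred_eq] at hs
  have hIoc : Ioc s t ∈ 𝓝[>] s := Ioc_mem_nhdsGT hst
  rcases hs.eq_or_lt with heq | hlt
  · have hc : c ≤ φ s := heq ▸ le_max_left _ _
    obtain ⟨z, hz, hzI⟩ := ((h s hs0 hc).and_eventually hIoc).exists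
    refine ⟨z, ?_, hzI⟩
    rw [mem_ofPred_eq]
    rcases le_total c (φ 0 - a * s) with hcs | hcs
    · rw [max_eq_right hcs] at heq
      exact le_max_of_le_right (by linarith)
    · rw [max_eq_left hcs] at heq
      exact le_max_of_le_left (by nlinarith [hzI.1])
  · have hφs : ContinuousWithinAt φ (Ioi s) s :=
      (hφ s hs0).mono fun z hz => hs0.trans (mem_Ioi.1 hz).le
    have hlt_near := hφs.eventually_lt (hB.continuousAt.continuousWithinAt) hlt
    obtain ⟨z, hz, hzI⟩ := (hlt_near.and hIoc).exists
    exact ⟨z, le_of_lt hz, hzI⟩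

/-! ### Bounded inputs -/

section Inputs

variable {m : ℕ} {u v : ℝ → EuclideanSpace ℝ (Fin m)} {r r' τ : ℝ}

theorem uNorm_nonneg : 0 ≤ uNorm u := ENNReal.toReal_nonneg

theorem BddInput.ae_norm_le (hu : BddInput u) :
    ∀ᵐ t ∂(volume.restrict (Ici (0 : ℝ))), ‖u t‖ ≤ uNorm u := by
  filter_upwards [ENNReal.ae_le_essSup (μ := volume.restrict (Ici (0 : ℝ)))
    (fun t => (‖u t‖₊ : ℝ≥0∞))] with t ht
  simpa [uNorm] using ENNReal.toReal_mono hu ht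

/-- A measurable input bounded by `r` at every time, rather than almost every time: such inputs
are admissible, and they can be concatenated without any null-set bookkeeping. -/
structure IsInputBoundedBy (u : ℝ → EuclideanSpace ℝ (Fin m)) (r : ℝ) : Prop where
  measurable : Measurable u
  norm_le : ∀ t, ‖u t‖ ≤ r

/-- The input equal to `u` on `(-∞,τ)` and to `v` restarted at time `τ` from then on. -/
def concatInput (τ : ℝ) (u v : ℝ → EuclideanSpace ℝ (Fin m)) : ℝ → EuclideanSpace ℝ (Fin m) :=
  fun s => if s < τ then u s else v (s - τ)

namespace IsInputBoundedBy

theorem const (μ : EuclideanSpace ℝ (Fin m)) : IsInputBoundedBy (fun _ => μ) ‖μ‖ :=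
  ⟨measurable_const, fun _ => le_rfl⟩

theorem mono (hu : IsInputBoundedBy u r) (hr : r ≤ r') : IsInputBoundedBy u r' :=
  ⟨hu.measurable, fun t => (hu.norm_le t).trans hr⟩

theorem concat (hu : IsInputBoundedBy u r) (hv : IsInputBoundedBy v r) :
    IsInputBoundedBy (concatInput τ u v) r where
  measurable := hu.measurable.ite measurableSet_Iio (hv.measurable.comp (measurable_sub_const τ))
  norm_le t := by
    unfold concatInput
    split_ifs
    exacts [hu.norm_le t, hv.norm_le _]

theorem nonneg (hu : IsInputBoundedBy u r) : 0 ≤ r := (norm_nonneg _).trans (hu.norm_le 0)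

theorem isInput (hu : IsInputBoundedBy u r) : IsInput u :=
  ⟨hu.measurable, fun _ _ => ⟨r, Eventually.of_forall hu.norm_le⟩⟩

theorem uNormE_le (hu : IsInputBoundedBy u r) : uNormE u ≤ ENNReal.ofReal r := by
  refine essSup_le_of_ae_le _ (Eventually.of_forall fun t => ?_)
  change (‖u t‖₊ : ℝ≥0∞) ≤ ENNReal.ofReal r
  rw [← ENNReal.ofReal_coe_nnreal]
  exact ENNReal.ofReal_le_ofReal (hu.norm_le t)

theorem bddInput (hu : IsInputBoundedBy u r) : BddInput u :=
  ne_top_of_le_ne_top ENNReal.ofReal_ne_top hu.uNormE_le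

theorem uNorm_le (hu : IsInputBoundedBy u r) : uNorm u ≤ r :=
  ENNReal.toReal_le_of_le_ofReal hu.nonneg hu.uNormE_le

end IsInputBoundedBy

end Inputs

/-! ### Solutions of the integral equation -/

section VectorField

variable {E F G : Type*} [NormedAddCommGroup E] [ProperSpace E] [NormedAddCommGroup F]
  [ProperSpace F] [NormedAddCommGroup G] {f : E → F → G}

theorem exists_norm_sub_le_of_locallyLipschitz
    (hf : LocallyLipschitz fun q : E × F => f q.1 q.2) (R r : ℝ) :
    ∃ K : ℝ, 0 ≤ K ∧ ∀ a b μ, ‖a‖ ≤ R → ‖b‖ ≤ R → ‖μ‖ ≤ r → ‖f a μ - f b μ‖ ≤ K * ‖a - b‖ := by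
  obtain ⟨K, hK⟩ := (hf.locallyLipschitzOn (s := Metric.closedBall (0:E) R ×ˢ
    Metric.closedBall (0:F) r)).exists_lipschitzOnWith_of_compact
    ((isCompact_closedBall _ _).prod (isCompact_closedBall _ _))
  refine ⟨K, K.2, fun a b μ ha hb hμ => ?_⟩
  have := hK.dist_le_mul (a, μ) ⟨by simpa using ha, by simpa using hμ⟩ (b, μ)
    ⟨by simpa using hb, by simpa using hμ⟩
  simpa [dist_eq_norm] using this

theorem exists_norm_le_of_continuous (hf : Continuous fun q : E × F => f q.1 q.2) (R r : ℝ) :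
    ∃ M : ℝ, 0 ≤ M ∧ ∀ a μ, ‖a‖ ≤ R → ‖μ‖ ≤ r → ‖f a μ‖ ≤ M := by
  obtain ⟨M, hM⟩ := ((isCompact_closedBall (0:E) R).prod
    (isCompact_closedBall (0:F) r)).exists_bound_of_continuousOn hf.continuousOn
  refine ⟨max M 0, le_max_right _ _, fun a μ ha hμ => le_max_of_le_left ?_⟩
  exact hM (a, μ) ⟨by simpa using ha, by simpa using hμ⟩

end VectorField

/-- `X` is a continuous solution of `ẋ = f(x,u)`, `x(0) = ξ`, on `[0,T]`. Integrability of the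
right-hand side is part of the definition, because the integral of a non-integrable function
is `0`. -/
structure IsSolutionOn {E F : Type*} [NormedAddCommGroup E] [NormedSpace ℝ E]
    (f : E → F → E) (X : ℝ → E) (ξ : E) (u : ℝ → F) (T : ℝ) : Prop where
  continuousOn : ContinuousOn X (Icc 0 T)
  integrable : IntervalIntegrable (fun s => f (X s) (u s)) volume 0 T
  eq_add_integral : ∀ t ∈ Icc 0 T, X t = ξ + ∫ s in (0 : ℝ)..t, f (X s) (u s)

namespace IsSolutionOn

section Basic

variable {E F : Type*} [NormedAddCommGroup E] [NormedSpace ℝ E] {f : E → F → E} {X : ℝ → E}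
  {ξ : E} {u v : ℝ → F} {s t T : ℝ}

theorem intervalIntegrable (hX : IsSolutionOn f X ξ u T) (hs : s ∈ Icc 0 T) (ht : t ∈ Icc 0 T) :
    IntervalIntegrable (fun s => f (X s) (u s)) volume s t := by
  refine hX.integrable.mono_set ?_
  rw [uIcc_of_le (hs.1.trans hs.2)]
  exact uIcc_subset_Icc hs ht

theorem sub_eq_integral (hX : IsSolutionOn f X ξ u T) (hs : s ∈ Icc 0 T) (ht : t ∈ Icc 0 T) :
    X t - X s = ∫ r in s..t, f (X r) (u r) := by
  have h0 : (0 : ℝ) ∈ Icc 0 T := left_mem_Icc.2 (hs.1.trans hs.2)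
  rw [hX.eq_add_integral t ht, hX.eq_add_integral s hs, add_sub_add_left_eq_sub,
    intervalIntegral.integral_interval_sub_left (hX.intervalIntegrable h0 ht)
      (hX.intervalIntegrable h0 hs)]

theorem congr_ae (hX : IsSolutionOn f X ξ u T) (hT : 0 ≤ T)
    (huv : u =ᵐ[volume.restrict (Ioc 0 T)] v) : IsSolutionOn f X ξ v T := by
  have hfuv : (fun s => f (X s) (u s)) =ᵐ[volume.restrict (Ioc 0 T)] fun s => f (X s) (v s) :=
    huv.mono fun s hs => congrArg (f (X s)) hs
  refine ⟨hX.continuousOn, hX.integrable.congr_ae (by rwa [uIoc_of_le hT]), fun t ht => ?_⟩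
  rw [hX.eq_add_integral t ht, intervalIntegral.integral_of_le ht.1,
    intervalIntegral.integral_of_le ht.1]
  exact congrArg _ (integral_congr_ae
    (ae_restrict_of_ae_restrict_of_subset (Ioc_subset_Ioc_right ht.2) hfuv))

theorem restart {τ : ℝ} (hX : IsSolutionOn f X ξ u (T + τ)) (hτ : 0 ≤ τ) (hT : 0 ≤ T) :
    IsSolutionOn f (fun s => X (s + τ)) (X τ) (fun s => u (s + τ)) T := by
  have hmem : ∀ s ∈ Icc 0 T, s + τ ∈ Icc 0 (T + τ) := fun s hs =>
    ⟨add_nonneg hs.1 hτ, by linarith [hs.2]⟩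
  have hτmem : τ ∈ Icc 0 (T + τ) := by simpa using hmem 0 (left_mem_Icc.2 hT)
  refine ⟨hX.continuousOn.comp (by fun_prop) hmem, ?_, fun s hs => ?_⟩
  · simpa using (hX.intervalIntegrable hτmem (hmem T (right_mem_Icc.2 hT))).comp_add_right τ
  · rw [intervalIntegral.integral_comp_add_right (fun s => f (X s) (u s)), zero_add,
      ← hX.sub_eq_integral hτmem (hmem s hs), add_sub_cancel]

theorem norm_sub_sub_smul_le [CompleteSpace E] {C : ℝ} {w : E} (hX : IsSolutionOn f X ξ u T)
    (hs : s ∈ Icc 0 T) (ht : t ∈ Icc 0 T) (hst : s ≤ t)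
    (hC : ∀ᵐ r, r ∈ Ioc s t → ‖f (X r) (u r) - w‖ ≤ C) :
    ‖X t - X s - (t - s) • w‖ ≤ C * (t - s) := by
  rw [hX.sub_eq_integral hs ht, ← intervalIntegral.integral_const,
    ← intervalIntegral.integral_sub (hX.intervalIntegrable hs ht) intervalIntegrable_const,
    ← abs_of_nonneg (sub_nonneg.2 hst)]
  exact intervalIntegral.norm_integral_le_of_norm_le_const_ae (by rwa [uIoc_of_le hst])

end Basic

section Uniqueness

variable {E F : Type*} [NormedAddCommGroup E] [NormedSpace ℝ E] [NormedAddCommGroup F]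
  {f : E → F → E} {X Y : ℝ → E} {ξ η : E} {u : ℝ → F} {t T r : ℝ}

theorem norm_sub_le {R K : ℝ} (hX : IsSolutionOn f X ξ u T) (hY : IsSolutionOn f Y η u T)
    (hu : ∀ᵐ t ∂(volume.restrict (Ioc 0 T)), ‖u t‖ ≤ r) (hK : 0 ≤ K)
    (hf : ∀ a b μ, ‖a‖ ≤ R → ‖b‖ ≤ R → ‖μ‖ ≤ r → ‖f a μ - f b μ‖ ≤ K * ‖a - b‖)
    (hXR : ∀ t ∈ Icc 0 T, ‖X t‖ ≤ R) (hYR : ∀ t ∈ Icc 0 T, ‖Y t‖ ≤ R) (ht : t ∈ Icc 0 T) :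
    ‖X t - Y t‖ ≤ ‖ξ - η‖ * Real.exp (K * t) := by
  have h0 : (0 : ℝ) ∈ Icc 0 T := left_mem_Icc.2 (ht.1.trans ht.2)
  have hXY : ContinuousOn (fun t => ‖X t - Y t‖) (Icc 0 T) :=
    (hX.continuousOn.sub hY.continuousOn).norm
  refine le_mul_exp_of_le_add_mul_integral hK hXY (fun t ht => ?_) ht
  have h_int : ‖∫ s in (0 : ℝ)..t, (f (X s) (u s) - f (Y s) (u s))‖ ≤
      ∫ s in (0 : ℝ)..t, K * ‖X s - Y s‖ := by
    refine intervalIntegral.norm_integral_le_of_norm_le ht.1 ?_ ?_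
    · filter_upwards [(ae_restrict_iff' measurableSet_Ioc).1 hu] with s hus hs
      have hsT : s ∈ Icc 0 T := ⟨hs.1.le, hs.2.trans ht.2⟩
      exact hf _ _ _ (hXR s hsT) (hYR s hsT) (hus ⟨hs.1, hsT.2⟩)
    · refine ContinuousOn.intervalIntegrable ((continuousOn_const.mul hXY).mono ?_)
      rw [uIcc_of_le ht.1]
      exact Icc_subset_Icc_right ht.2
  calc ‖X t - Y t‖ = ‖(ξ - η) + ∫ s in (0 : ℝ)..t, (f (X s) (u s) - f (Y s) (u s))‖ := by
        rw [intervalIntegral.integral_sub (hX.intervalIntegrable h0 ht)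
          (hY.intervalIntegrable h0 ht), hX.eq_add_integral t ht, hY.eq_add_integral t ht,
          add_sub_add_comm]
    _ ≤ ‖ξ - η‖ + ∫ s in (0 : ℝ)..t, K * ‖X s - Y s‖ :=
        (norm_add_le _ _).trans (add_le_add_right h_int _)
    _ = _ := by rw [intervalIntegral.integral_const_mul]

theorem unique [ProperSpace E] [ProperSpace F]
    (hf : LocallyLipschitz fun q : E × F => f q.1 q.2) (hX : IsSolutionOn f X ξ u T)
    (hY : IsSolutionOn f Y ξ u T) (hu : ∀ᵐ t ∂(volume.restrict (Ioc 0 T)), ‖u t‖ ≤ r)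
    (ht : t ∈ Icc 0 T) : X t = Y t := by
  obtain ⟨R₁, hR₁⟩ := isCompact_Icc.exists_bound_of_continuousOn hX.continuousOn
  obtain ⟨R₂, hR₂⟩ := isCompact_Icc.exists_bound_of_continuousOn hY.continuousOn
  obtain ⟨K, hK0, hK⟩ := exists_norm_sub_le_of_locallyLipschitz hf (max R₁ R₂) r
  have hXY := hX.norm_sub_le hY hu hK0 hK (fun s hs => le_max_of_le_left (hR₁ s hs))
    (fun s hs => le_max_of_le_right (hR₂ s hs)) ht
  rwa [sub_self, norm_zero, zero_mul, norm_le_zero_iff, sub_eq_zero] at hXY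

end Uniqueness

end IsSolutionOn

/-! ### Trajectories of BIBS systems -/

/-- A primitive is continuous where the integrand is integrable, and `0` elsewhere: it is
measurable with no assumption on the integrand. -/
theorem aestronglyMeasurable_primitive {E : Type*} [NormedAddCommGroup E] [NormedSpace ℝ E]
    (g : ℝ → E) (T : ℝ) :
    AEStronglyMeasurable (fun t => ∫ s in (0 : ℝ)..t, g s) (volume.restrict (Ioc 0 T)) := by
  let G : ℝ → E := fun t => ∫ s in (0 : ℝ)..t, g s
  let I : Set ℝ := {t | 0 ≤ t ∧ IntervalIntegrable g volume 0 t}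
  have hI_conn : I.OrdConnected := by
    refine ordConnected_def.2 fun a ha b hb t ht => ⟨ha.1.trans ht.1, hb.2.mono_set ?_⟩
    rw [uIcc_of_le (ha.1.trans ht.1), uIcc_of_le hb.1]
    exact Icc_subset_Icc_right ht.2
  have hG_Icc : ∀ b ∈ I, ContinuousOn G (Icc 0 b) := fun b hb => by
    simpa only [uIcc_of_le hb.1] using
      intervalIntegral.continuousOn_primitive_interval' hb.2 left_mem_uIcc
  have hG : ContinuousOn G I := by
    intro t ht
    by_cases hmax : ∃ b ∈ I, t < b
    · obtain ⟨b, hb, htb⟩ := hmax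
      refine (hG_Icc b hb t ⟨ht.1, htb.le⟩).mono_of_mem_nhdsWithin ?_
      filter_upwards [self_mem_nhdsWithin, mem_nhdsWithin_of_mem_nhds (Iio_mem_nhds htb)]
        with s hs hsb using ⟨hs.1, (mem_Iio.1 hsb).le⟩
    · push Not at hmax
      exact (hG_Icc t ht t ⟨ht.1, le_rfl⟩).mono fun s hs => ⟨hs.1, hmax s hs⟩
  have hI : MeasurableSet I := hI_conn.measurableSet
  have hG_diff : AEStronglyMeasurable G (volume.restrict (Ioc 0 T \ I)) :=
    (aestronglyMeasurable_const (b := (0:E))).congr <| ae_restrict_of_forall_mem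
      (measurableSet_Ioc.diff hI) fun t ht =>
        (intervalIntegral.integral_undef fun h => ht.2 ⟨ht.1.1.le, h⟩).symm
  refine (aestronglyMeasurable_union_iff.2 ⟨hG.aestronglyMeasurable hI, hG_diff⟩).mono_measure
    (Measure.restrict_mono ?_ le_rfl)
  rw [union_sdiff_self]
  exact subset_union_right

section Trajectories

variable {n m : ℕ}
  {f : EuclideanSpace ℝ (Fin n) → EuclideanSpace ℝ (Fin m) → EuclideanSpace ℝ (Fin n)}
  {x : ℝ → EuclideanSpace ℝ (Fin n) → (ℝ → EuclideanSpace ℝ (Fin m)) → EuclideanSpace ℝ (Fin n)}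
  {u v : ℝ → EuclideanSpace ℝ (Fin m)} {ξ : EuclideanSpace ℝ (Fin n)} {R r t T τ : ℝ}

theorem IsSolutionMap.apply_zero (hx : IsSolutionMap f x) (hu : IsInput u)
    (ξ : EuclideanSpace ℝ (Fin n)) : x 0 ξ u = ξ := by
  rw [hx ξ u hu 0 self_mem_Ici]; simp

namespace IsBIBS

theorem isSolutionOn (hB : IsBIBS f x)
    (hf : Continuous fun q : EuclideanSpace ℝ (Fin n) × EuclideanSpace ℝ (Fin m) => f q.1 q.2)
    (hu : IsInput u) (hb : BddInput u) (ξ : EuclideanSpace ℝ (Fin n)) (hT : 0 ≤ T) :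
    IsSolutionOn f (fun t => x t ξ u) ξ u T := by
  obtain ⟨hx, σ, -, hσ⟩ := hB
  obtain ⟨M, -, hM⟩ := exists_norm_le_of_continuous hf (max (σ ‖ξ‖) (σ (uNorm u))) (uNorm u)
  have hx_meas : AEStronglyMeasurable (fun t => x t ξ u) (volume.restrict (Ioc 0 T)) :=
    ((aestronglyMeasurable_primitive (fun s => f (x s ξ u) (u s)) T).const_add ξ).congr <|
      ae_restrict_of_forall_mem measurableSet_Ioc fun t ht => (hx ξ u hu t ht.1.le).symm
  have hfx : IntervalIntegrable (fun s => f (x s ξ u) (u s)) volume 0 T := by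
    rw [intervalIntegrable_iff_integrableOn_Ioc_of_le hT]
    refine IntegrableOn.of_bound (C := M) (by simp)
      (hf.comp_aestronglyMeasurable (hx_meas.prodMk hu.1.aestronglyMeasurable)) ?_
    filter_upwards [ae_restrict_of_ae_restrict_of_subset
      (Ioc_subset_Icc_self.trans Icc_subset_Ici_self) hb.ae_norm_le,
      ae_restrict_mem measurableSet_Ioc] with t hut ht
    exact hM _ _ (hσ ξ u hu hb t ht.1.le) hut
  refine ⟨?_, hfx, fun t ht => hx ξ u hu t ht.1⟩
  have hprim := intervalIntegral.continuousOn_primitive_interval' hfx left_mem_uIcc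
  rw [uIcc_of_le hT] at hprim
  exact (hprim.const_add ξ).congr fun t ht => hx ξ u hu t ht.1

theorem continuousOn (hB : IsBIBS f x)
    (hf : Continuous fun q : EuclideanSpace ℝ (Fin n) × EuclideanSpace ℝ (Fin m) => f q.1 q.2)
    (hu : IsInput u) (hb : BddInput u) (ξ : EuclideanSpace ℝ (Fin n)) :
    ContinuousOn (fun t => x t ξ u) (Ici 0) := by
  intro t (ht : 0 ≤ t)
  have ht1 : 0 ≤ t + 1 := by positivity
  refine ((hB.isSolutionOn hf hu hb ξ ht1).continuousOn t ⟨ht, by linarith⟩).mono_of_mem_nhdsWithin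
    ?_
  filter_upwards [self_mem_nhdsWithin, mem_nhdsWithin_of_mem_nhds (Iio_mem_nhds (lt_add_one t))]
    with s hs hst using ⟨hs, (mem_Iio.1 hst).le⟩

theorem exists_norm_le (hB : IsBIBS f x) (R r : ℝ) :
    ∃ R', ∀ ξ u t, ‖ξ‖ ≤ R → IsInput u → BddInput u → uNorm u ≤ r → 0 ≤ t → ‖x t ξ u‖ ≤ R' := by
  obtain ⟨-, σ, hσ, hbound⟩ := hB
  exact ⟨max (σ R) (σ r), fun ξ u t hξ hu hb hur ht => (hbound ξ u hu hb t ht).trans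
    (max_le_max (hσ.mono (norm_nonneg _) hξ) (hσ.mono uNorm_nonneg hur))⟩

theorem apply_concatInput (hB : IsBIBS f x)
    (hf : LocallyLipschitz fun q : EuclideanSpace ℝ (Fin n) × EuclideanSpace ℝ (Fin m) =>
      f q.1 q.2)
    (hu : IsInputBoundedBy u r) (hv : IsInputBoundedBy v r) (ξ : EuclideanSpace ℝ (Fin n))
    (hτ : 0 ≤ τ) (ht : 0 ≤ t) : x (t + τ) ξ (concatInput τ u v) = x t (x τ ξ u) v := by
  let w := concatInput τ u v
  have hw : IsInputBoundedBy w r := hu.concat hv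
  have hsol : ∀ {u}, IsInputBoundedBy u r → ∀ ξ {T}, 0 ≤ T →
      IsSolutionOn f (fun t => x t ξ u) ξ u T := fun hu ξ _ hT =>
    hB.isSolutionOn hf.continuous hu.isInput hu.bddInput ξ hT
  have hwu : w =ᵐ[volume.restrict (Ioc 0 τ)] u := by
    rw [← restrict_Ioo_eq_restrict_Ioc]
    exact ae_restrict_of_forall_mem measurableSet_Ioo fun s hs => if_pos hs.2
  have hwv : (fun s => w (s + τ)) =ᵐ[volume.restrict (Ioc 0 t)] v :=
    ae_restrict_of_forall_mem measurableSet_Ioc fun s hs => by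
      simp [w, concatInput, hs.1.le]
  have hwτ : x τ ξ w = x τ ξ u := ((hsol hw ξ hτ).congr_ae hτ hwu).unique hf (hsol hu ξ hτ)
    (Eventually.of_forall hu.norm_le) ⟨hτ, le_rfl⟩
  have hrestart := ((hsol hw ξ (add_nonneg ht hτ)).restart hτ ht).congr_ae ht hwv
  rw [hwτ] at hrestart
  exact hrestart.unique hf (hsol hv _ ht) (Eventually.of_forall hv.norm_le) ⟨ht, le_rfl⟩

theorem exists_lipschitz_flow (hB : IsBIBS f x)
    (hf : LocallyLipschitz fun q : EuclideanSpace ℝ (Fin n) × EuclideanSpace ℝ (Fin m) =>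
      f q.1 q.2)
    (R r T : ℝ) :
    ∃ L, 0 ≤ L ∧ ∀ ξ η u t, ‖ξ‖ ≤ R → ‖η‖ ≤ R → IsInputBoundedBy u r → 0 ≤ t → t ≤ T →
      ‖x t ξ u - x t η u‖ ≤ L * ‖ξ - η‖ := by
  obtain ⟨R', hR'⟩ := hB.exists_norm_le R r
  obtain ⟨K, hK0, hK⟩ := exists_norm_sub_le_of_locallyLipschitz hf R' r
  refine ⟨Real.exp (K * T), (Real.exp_pos _).le, fun ξ η u t hξ hη hu ht htT => ?_⟩
  have hsol : ∀ ξ, IsSolutionOn f (fun t => x t ξ u) ξ u t := fun ξ =>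
    hB.isSolutionOn hf.continuous hu.isInput hu.bddInput ξ ht
  have hbound : ∀ ξ, ‖ξ‖ ≤ R → ∀ s ∈ Icc 0 t, ‖x s ξ u‖ ≤ R' := fun ξ hξ s hs =>
    hR' ξ u s hξ hu.isInput hu.bddInput hu.uNorm_le hs.1
  have hgronwall := (hsol ξ).norm_sub_le (hsol η) (Eventually.of_forall hu.norm_le) hK0 hK
    (hbound ξ hξ) (hbound η hη) (right_mem_Icc.2 ht)
  calc ‖x t ξ u - x t η u‖ ≤ ‖ξ - η‖ * Real.exp (K * t) := hgronwall
    _ ≤ ‖ξ - η‖ * Real.exp (K * T) := by gcongr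
    _ = Real.exp (K * T) * ‖ξ - η‖ := mul_comm _ _

theorem exists_first_order_expansion (hB : IsBIBS f x)
    (hf : LocallyLipschitz fun q : EuclideanSpace ℝ (Fin n) × EuclideanSpace ℝ (Fin m) =>
      f q.1 q.2)
    (R r : ℝ) :
    ∃ M K, 0 ≤ M ∧ 0 ≤ K ∧ ∀ ξ ζ μ s, ‖ξ‖ ≤ R → ‖ζ‖ ≤ R → ‖μ‖ ≤ r → 0 ≤ s →
      ‖f ξ μ‖ ≤ M ∧ ‖(x s ζ fun _ => μ) - ζ‖ ≤ M * s ∧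
      ‖(x s ζ fun _ => μ) - ζ - s • f ξ μ‖ ≤ K * (M * s + ‖ζ - ξ‖) * s := by
  obtain ⟨R', hR'⟩ := hB.exists_norm_le R r
  obtain ⟨M, hM0, hM⟩ := exists_norm_le_of_continuous hf.continuous (max R R') r
  obtain ⟨K, hK0, hK⟩ := exists_norm_sub_le_of_locallyLipschitz hf (max R R') r
  refine ⟨M, K, hM0, hK0, fun ξ ζ μ s hξ hζ hμ hs => ?_⟩
  have hu := IsInputBoundedBy.const μ
  have hbound : ∀ t, 0 ≤ t → ‖x t ζ fun _ => μ‖ ≤ max R R' := fun t ht =>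
    le_max_of_le_right (hR' ζ _ t hζ hu.isInput hu.bddInput (hu.uNorm_le.trans hμ) ht)
  have hξ' : ‖ξ‖ ≤ max R R' := le_max_of_le_left hξ
  have hexp : ∀ {C t} {w : EuclideanSpace ℝ (Fin n)}, 0 ≤ t →
      (∀ τ ∈ Ioc 0 t, ‖f (x τ ζ fun _ => μ) μ - w‖ ≤ C) →
      ‖(x t ζ fun _ => μ) - ζ - t • w‖ ≤ C * t := fun {C t w} ht hC => by
    simpa only [hB.1.apply_zero hu.isInput, sub_zero] using
      (hB.isSolutionOn hf.continuous hu.isInput hu.bddInput ζ ht).norm_sub_sub_smul_le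
        (left_mem_Icc.2 ht) (right_mem_Icc.2 ht) ht (w := w) (Eventually.of_forall hC)
  have hspeed : ∀ t, 0 ≤ t → ‖(x t ζ fun _ => μ) - ζ‖ ≤ M * t := fun t ht => by
    simpa using hexp (w := 0) ht fun τ hτ => by simpa using hM _ μ (hbound τ hτ.1.le) hμ
  refine ⟨hM ξ μ hξ' hμ, hspeed s hs, hexp hs fun τ hτ => ?_⟩
  calc ‖f (x τ ζ fun _ => μ) μ - f ξ μ‖ ≤ K * ‖(x τ ζ fun _ => μ) - ξ‖ :=
        hK _ _ μ (hbound τ hτ.1.le) hξ' hμ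
    _ ≤ K * (‖(x τ ζ fun _ => μ) - ζ‖ + ‖ζ - ξ‖) := by
        gcongr; exact norm_sub_le_norm_sub_add_norm_sub _ _ _
    _ ≤ K * (M * s + ‖ζ - ξ‖) := by
        gcongr; exact (hspeed τ hτ.1.le).trans (mul_le_mul_of_nonneg_left hτ.2 hM0)

end IsBIBS

end Trajectories

/-! ### Sufficiency of the Lyapunov condition -/

theorem IsSolutionOn.eventually_apply_le_sub {E F : Type*} [NormedAddCommGroup E]
    [NormedSpace ℝ E] [CompleteSpace E] {f : E → F → E} {X : ℝ → E} {ξ : E} {u : ℝ → F}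
    {V : E → ℝ} {D : E →L[ℝ] ℝ} {t T M a b : ℝ} (hX : IsSolutionOn f X ξ u T) (ht : t ∈ Ico 0 T)
    (hV : HasFDerivAt V D (X t)) (hspeed : ∀ᵐ s, s ∈ Ioc t T → ‖f (X s) (u s)‖ ≤ M)
    (hdec : ∀ᵐ s, s ∈ Ioc t T → D (f (X s) (u s)) ≤ -b) (hab : a < b) :
    ∀ᶠ z in 𝓝[>] t, V (X z) ≤ V (X t) - a * (z - t) := by
  have htT : t ∈ Icc 0 T := Ico_subset_Icc_self ht
  have hX_tendsto : Tendsto X (𝓝[>] t) (𝓝 (X t)) := by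
    refine ((hX.continuousOn t htT).mono_of_mem_nhdsWithin ?_)
    exact mem_of_superset (Ioc_mem_nhdsGT ht.2) fun z hz => ⟨ht.1.trans hz.1.le, hz.2⟩
  have hc : 0 < (b - a) / (|M| + 1) := by have := sub_pos.2 hab; positivity
  filter_upwards [hX_tendsto.eventually (hV.isLittleO.def hc), Ioc_mem_nhdsGT ht.2] with z hVz hz
  have hz' : z ∈ Icc 0 T := ⟨ht.1.trans hz.1.le, hz.2⟩
  have hIoc : ∀ {s}, s ∈ Ioc t z → s ∈ Ioc t T := fun hs => ⟨hs.1, hs.2.trans hz.2⟩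
  have hspeed' : ‖X z - X t‖ ≤ |M| * (z - t) := by
    have := hX.norm_sub_sub_smul_le (C := |M|) (w := 0) htT hz' hz.1.le <| by
      filter_upwards [hspeed] with s hs hsz
      simpa using (hs (hIoc hsz)).trans (le_abs_self M)
    simpa using this
  have hlin : D (X z - X t) ≤ -b * (z - t) := by
    have hint := hX.intervalIntegrable htT hz'
    calc D (X z - X t) = ∫ s in t..z, D (f (X s) (u s)) := by
          rw [hX.sub_eq_integral htT hz', D.intervalIntegral_comp_comm hint]
      _ ≤ ∫ _ in t..z, -b := by
          refine intervalIntegral.integral_mono_ae_restrict hz.1.le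
            ⟨D.integrable_comp hint.1, D.integrable_comp hint.2⟩ intervalIntegrable_const ?_
          rw [← restrict_Ioc_eq_restrict_Icc]
          refine (ae_restrict_iff' measurableSet_Ioc).2 ?_
          filter_upwards [hdec] with s hs hsz using hs (hIoc hsz)
      _ = -b * (z - t) := by rw [intervalIntegral.integral_const, smul_eq_mul, mul_comm]
  have hremainder : V (X z) - V (X t) - D (X z - X t) ≤ (b - a) * (z - t) :=
    calc V (X z) - V (X t) - D (X z - X t) ≤ (b - a) / (|M| + 1) * ‖X z - X t‖ :=
          (le_abs_self _).trans hVz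
      _ ≤ (b - a) / (|M| + 1) * ((|M| + 1) * (z - t)) := by
          gcongr
          exact hspeed'.trans (mul_le_mul_of_nonneg_right (by simp) (sub_nonneg.2 hz.1.le))
      _ = (b - a) * (z - t) := by rw [← mul_assoc, div_mul_cancel₀ _ (by positivity)]
  linarith

theorem exists_pos_forall_le_neg_of_isCompact {X : Type*} [TopologicalSpace X] {C : Set X}
    (hC : IsCompact C) {g : X → ℝ} (hg : ContinuousOn g C) (hneg : ∀ q ∈ C, g q < 0) :
    ∃ a > 0, ∀ q ∈ C, g q ≤ -a := by
  rcases C.eq_empty_or_nonempty with rfl | hne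
  · exact ⟨1, one_pos, by simp⟩
  · obtain ⟨q, hq, hmax⟩ := hC.exists_isMaxOn hne hg
    exact ⟨-g q, neg_pos.2 (hneg q hq), fun q' hq' => by simpa using hmax hq'⟩

theorem exists_isClassKL_of_uniformly_attractive {ι : Type*} {size gain : ι → ℝ} {φ : ι → ℝ → ℝ}
    {α : ℝ → ℝ} (hα : IsClassK α) (hsize : ∀ i, 0 ≤ size i)
    (hbound : ∀ i t, 0 ≤ t → gain i < φ i t → φ i t ≤ α (size i))
    (hattr : ∀ S ε, 0 < ε → ∃ T, ∀ i t, size i ≤ S → 0 ≤ t → T ≤ t → φ i t ≤ max ε (gain i)) :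
    ∃ β, IsClassKL β ∧ ∀ i t, 0 ≤ t → φ i t ≤ max (β (size i) t) (gain i) := by
  let late : ℝ → ℝ → Set ℝ := fun s t =>
    {w | ∃ i t', size i ≤ s ∧ 0 ≤ t' ∧ t ≤ t' ∧ gain i < φ i t' ∧ w = φ i t'}
  let ψ : ℝ → ℝ → ℝ := fun s t => sSup (insert 0 (late s t))
  have hlate_le : ∀ s t, ∀ w ∈ insert 0 (late s t), w ≤ α (max s 0) := by
    rintro s t w (rfl | ⟨i, t', his, ht', -, hgain, rfl⟩)
    · exact hα.nonneg (le_max_right _ _)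
    · exact (hbound i t' ht' hgain).trans (hα.mono (hsize i) (le_max_of_le_left his))
  have hbdd : ∀ s t, BddAbove (insert 0 (late s t)) := fun s t => ⟨_, hlate_le s t⟩
  have hne : ∀ s t, (insert 0 (late s t)).Nonempty := fun s t => insert_nonempty _ _
  have hψ0 : ∀ s t, 0 ≤ ψ s t := fun s t => le_csSup (hbdd s t) (mem_insert _ _)
  have hlim : ∀ s, 0 ≤ s → Tendsto (fun t => ψ s t) atTop (𝓝 0) := fun s _ => by
    refine tendsto_order.2 ⟨fun a ha => Eventually.of_forall fun t => ha.trans_le (hψ0 s t),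
      fun ε hε => ?_⟩
    obtain ⟨T, hT⟩ := hattr s (ε / 2) (half_pos hε)
    filter_upwards [eventually_ge_atTop T] with t ht
    refine (csSup_le (hne s t) ?_).trans_lt (half_lt_self hε)
    rintro w (rfl | ⟨i, t', his, ht', htt', hgain, rfl⟩)
    · exact (half_pos hε).le
    · exact (le_max_iff.1 (hT i t' his ht' (ht.trans htt'))).resolve_right hgain.not_ge
  obtain ⟨β, hβ, hψβ⟩ := exists_isClassKL_ge hα hψ0
    (fun s t hs _ => csSup_le (hne s t) fun w hw => by simpa [hs] using hlate_le s t w hw)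
    (fun t s s' hss => csSup_le_csSup (hbdd s' t) (hne s t) <| insert_subset_insert
      fun w ⟨i, t', his, h⟩ => ⟨i, t', his.trans hss, h⟩)
    (fun s t t' htt => csSup_le_csSup (hbdd s t) (hne s t') <| insert_subset_insert
      fun w ⟨i, τ, his, hτ, htτ, h⟩ => ⟨i, τ, his, hτ, htt.trans htτ, h⟩)
    hlim
  refine ⟨β, hβ, fun i t ht => ?_⟩
  rcases le_or_gt (φ i t) (gain i) with hle | hlt
  · exact le_max_of_le_right hle
  · refine le_max_of_le_left (le_trans ?_ (hψβ (size i) t (hsize i) ht))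
    exact le_csSup (hbdd _ _) (mem_insert_of_mem _ ⟨i, t, le_rfl, ht, le_rfl, hlt, rfl⟩)

section Sufficiency

variable {n m p : ℕ}
  {f : EuclideanSpace ℝ (Fin n) → EuclideanSpace ℝ (Fin m) → EuclideanSpace ℝ (Fin n)}
  {h : EuclideanSpace ℝ (Fin n) → EuclideanSpace ℝ (Fin p)}
  {x : ℝ → EuclideanSpace ℝ (Fin n) → (ℝ → EuclideanSpace ℝ (Fin m)) → EuclideanSpace ℝ (Fin n)}
  {u : ℝ → EuclideanSpace ℝ (Fin m)} {ξ : EuclideanSpace ℝ (Fin n)}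
  {V : EuclideanSpace ℝ (Fin n) → ℝ} {α₁ α₂ χ : ℝ → ℝ} {a b t ε : ℝ}

theorem IsBIBS.eventually_apply_le_sub (hB : IsBIBS f x)
    (hf : Continuous fun q : EuclideanSpace ℝ (Fin n) × EuclideanSpace ℝ (Fin m) => f q.1 q.2)
    (hV : DifferentiableAt ℝ V (x t ξ u)) (hu : IsInput u) (hb : BddInput u) (ht : 0 ≤ t)
    (hdec : ∀ μ, ‖μ‖ ≤ uNorm u → fderiv ℝ V (x t ξ u) (f (x t ξ u) μ) ≤ -b) (hab : a < b) :
    ∀ᶠ z in 𝓝[>] t, V (x z ξ u) ≤ V (x t ξ u) - a * (z - t) := by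
  obtain ⟨c, hac, hcb⟩ := exists_between hab
  set D := fderiv ℝ V (x t ξ u)
  have hDf : ∀ᶠ q in 𝓝 (x t ξ u), ∀ μ ∈ Metric.closedBall 0 (uNorm u), D (f q μ) < -c := by
    refine (isCompact_closedBall _ _).eventually_forall_of_forall_eventually fun μ hμ => ?_
    refine ContinuousAt.eventually_lt (D.continuous.comp hf).continuousAt continuousAt_const ?_
    exact (hdec μ (mem_closedBall_zero_iff.1 hμ)).trans_lt (neg_lt_neg hcb)
  have hX : Tendsto (fun s => x s ξ u) (𝓝[≥] t) (𝓝 (x t ξ u)) :=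
    (hB.continuousOn hf hu hb ξ t ht).mono (Ici_subset_Ici.2 ht)
  obtain ⟨T, htT, hT⟩ := mem_nhdsGE_iff_exists_Icc_subset.1 (hX hDf)
  obtain ⟨R, hR⟩ := hB.exists_norm_le ‖ξ‖ (uNorm u)
  obtain ⟨M, -, hM⟩ := exists_norm_le_of_continuous hf R (uNorm u)
  have hur : ∀ᵐ s, s ∈ Ioc t T → ‖u s‖ ≤ uNorm u := by
    filter_upwards [(ae_restrict_iff' measurableSet_Ici).1 hb.ae_norm_le] with s hs hst
    exact hs (ht.trans hst.1.le)
  refine (hB.isSolutionOn hf hu hb ξ (ht.trans (mem_Ioi.1 htT).le)).eventually_apply_le_sub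
    (M := M) (b := c) ⟨ht, htT⟩ hV.hasFDerivAt ?_ ?_ hac
  · filter_upwards [hur] with s hs hst
    exact hM _ _ (hR ξ u s le_rfl hu hb le_rfl (ht.trans hst.1.le)) (hs hst)
  · filter_upwards [hur] with s hs hst
    exact (hT (Ioc_subset_Icc_self hst) (u s) (mem_closedBall_zero_iff.2 (hs hst))).le

theorem exists_uniform_lyapunov_decay (hB : IsBIBS f x)
    (hf : Continuous fun q : EuclideanSpace ℝ (Fin n) × EuclideanSpace ℝ (Fin m) => f q.1 q.2)
    (hV : ContDiff ℝ 1 V) (hχ : IsClassK χ)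
    (hdec : ∀ ξ μ, χ ‖μ‖ < V ξ → fderiv ℝ V ξ (f ξ μ) < 0) (S : ℝ) (hε : 0 < ε) :
    ∃ a > 0, ∀ ξ u t, IsInput u → BddInput u → ‖ξ‖ ≤ S → uNorm u ≤ S → 0 ≤ t →
      V (x t ξ u) ≤ max (max ε (2 * χ (uNorm u))) (V ξ - a * t) := by
  obtain ⟨R, hR⟩ := hB.exists_norm_le S S
  have hχ_norm : Continuous fun μ : EuclideanSpace ℝ (Fin m) => χ ‖μ‖ :=
    hχ.1.comp_continuous continuous_norm fun μ => norm_nonneg μ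
  let C : Set (EuclideanSpace ℝ (Fin n) × EuclideanSpace ℝ (Fin m)) :=
    (Metric.closedBall 0 R ×ˢ Metric.closedBall 0 S) ∩ {q | ε ≤ V q.1 ∧ 2 * χ ‖q.2‖ ≤ V q.1}
  have hC : IsCompact C := by
    have hVfst : Continuous fun q : EuclideanSpace ℝ (Fin n) × EuclideanSpace ℝ (Fin m) => V q.1 :=
      hV.continuous.comp continuous_fst
    refine ((isCompact_closedBall _ _).prod (isCompact_closedBall _ _)).inter_right ?_
    exact (isClosed_le continuous_const hVfst).inter
      (isClosed_le (continuous_const.mul (hχ_norm.comp continuous_snd)) hVfst)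
  have hVf : Continuous fun q : EuclideanSpace ℝ (Fin n) × EuclideanSpace ℝ (Fin m) =>
      fderiv ℝ V q.1 (f q.1 q.2) :=
    ((hV.continuous_fderiv one_ne_zero).comp continuous_fst).clm_apply hf
  obtain ⟨a, ha, hCa⟩ := exists_pos_forall_le_neg_of_isCompact hC hVf.continuousOn fun q hq =>
    hdec q.1 q.2 (by linarith [hχ.nonneg (norm_nonneg q.2), hq.2.1, hq.2.2])
  refine ⟨a / 2, half_pos ha, fun ξ u t hu hb hξ huS ht => ?_⟩
  have hmax := le_max_sub_of_frequently_decreasing (c := max ε (2 * χ (uNorm u))) (half_pos ha).le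
    (hV.continuous.comp_continuousOn (hB.continuousOn hf hu hb ξ)) (fun s hs hcs => ?_) ht
  · rwa [Function.comp_apply, Function.comp_apply, hB.1.apply_zero hu] at hmax
  · refine (hB.eventually_apply_le_sub hf (hV.differentiable one_ne_zero _) hu hb hs
      (fun μ hμ => ?_) (half_lt_self ha)).frequently
    refine hCa (x s ξ u, μ) ⟨⟨?_, ?_⟩, (le_max_left _ _).trans hcs, ?_⟩
    · exact mem_closedBall_zero_iff.2 (hR ξ u s hξ hu hb huS hs)
    · exact mem_closedBall_zero_iff.2 (hμ.trans huS)
    · exact (mul_le_mul_of_nonneg_left (hχ.mono (norm_nonneg _) hμ) zero_le_two).trans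
        ((le_max_right _ _).trans hcs)

theorem lyapunov_le_max (hB : IsBIBS f x)
    (hf : Continuous fun q : EuclideanSpace ℝ (Fin n) × EuclideanSpace ℝ (Fin m) => f q.1 q.2)
    (hV : ContDiff ℝ 1 V) (hχ : IsClassK χ)
    (hdec : ∀ ξ μ, χ ‖μ‖ < V ξ → fderiv ℝ V ξ (f ξ μ) < 0) (hu : IsInput u) (hb : BddInput u)
    (ξ : EuclideanSpace ℝ (Fin n)) (ht : 0 ≤ t) :
    V (x t ξ u) ≤ max (2 * χ (uNorm u)) (V ξ) := by
  refine le_of_forall_pos_le_add fun ε hε => ?_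
  obtain ⟨a, ha, hdecay⟩ :=
    exists_uniform_lyapunov_decay hB hf hV hχ hdec (max ‖ξ‖ (uNorm u)) hε
  have hat : 0 ≤ a * t := by positivity
  have hχu : 0 ≤ 2 * χ (uNorm u) := mul_nonneg zero_le_two (hχ.nonneg uNorm_nonneg)
  have hleft := le_max_left (2 * χ (uNorm u)) (V ξ)
  have hright := le_max_right (2 * χ (uNorm u)) (V ξ)
  refine (hdecay ξ u t hu hb (le_max_left _ _) (le_max_right _ _) ht).trans ?_
  exact max_le (max_le (by linarith) (by linarith)) (by linarith)

theorem exists_isClassKL_lyapunov_le (hB : IsBIBS f x)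
    (hf : Continuous fun q : EuclideanSpace ℝ (Fin n) × EuclideanSpace ℝ (Fin m) => f q.1 q.2)
    (hV : ContDiff ℝ 1 V) (hα₂ : IsClassK α₂) (hχ : IsClassK χ) (hVα₂ : ∀ ξ, V ξ ≤ α₂ ‖ξ‖)
    (hdec : ∀ ξ μ, χ ‖μ‖ < V ξ → fderiv ℝ V ξ (f ξ μ) < 0) :
    ∃ β, IsClassKL β ∧ ∀ ξ u t, IsInput u → BddInput u → 0 ≤ t →
      V (x t ξ u) ≤ max (β ‖ξ‖ t) (2 * χ (uNorm u) + α₂ (uNorm u)) := by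
  let ι := EuclideanSpace ℝ (Fin n) × {u : ℝ → EuclideanSpace ℝ (Fin m) // IsInput u ∧ BddInput u}
  have hle : ∀ (ξ) {u t}, IsInput u → BddInput u → 0 ≤ t →
      V (x t ξ u) ≤ max (2 * χ (uNorm u)) (α₂ ‖ξ‖) := fun ξ _ _ hu hb ht =>
    (lyapunov_le_max hB hf hV hχ hdec hu hb ξ ht).trans (max_le_max_left _ (hVα₂ ξ))
  obtain ⟨β, hβ, hVβ⟩ := exists_isClassKL_of_uniformly_attractive
    (size := fun i : ι => max ‖i.1‖ (uNorm i.2.1)) (gain := fun i => 2 * χ (uNorm i.2.1))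
    (φ := fun i t => V (x t i.1 i.2.1)) hα₂ (fun i => le_max_of_le_left (norm_nonneg _))
    (fun i t ht hlt => ((le_max_iff.1 (hle i.1 i.2.2.1 i.2.2.2 ht)).resolve_left hlt.not_ge).trans
      (hα₂.mono (norm_nonneg _) (le_max_left _ _))) fun S ε hε => by
    obtain ⟨a, ha, hdecay⟩ := exists_uniform_lyapunov_decay hB hf hV hχ hdec S hε
    refine ⟨α₂ S / a, fun i t hiS ht hT => ?_⟩
    have hiS' := max_le_iff.1 hiS
    refine (hdecay i.1 i.2.1 t i.2.2.1 i.2.2.2 hiS'.1 hiS'.2 ht).trans (max_le le_rfl ?_)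
    have hV0 := (hVα₂ i.1).trans (hα₂.mono (norm_nonneg _) hiS'.1)
    exact le_max_of_le_left (by linarith [(div_le_iff₀' ha).1 hT])
  refine ⟨β, hβ, fun ξ u t hu hb ht => ?_⟩
  have hχu := hχ.nonneg (uNorm_nonneg (u := u))
  have hαu := hα₂.nonneg (uNorm_nonneg (u := u))
  rcases le_total (uNorm u) ‖ξ‖ with hξ | hξ
  · have hVξ := hVβ ⟨ξ, u, hu, hb⟩ t ht
    rw [max_eq_left hξ] at hVξ
    exact hVξ.trans (max_le_max_left _ (by linarith))
  · have hαξ := hα₂.mono (norm_nonneg ξ) hξ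
    exact le_max_of_le_right ((hle ξ hu hb ht).trans (max_le (by linarith) (by linarith)))

theorem isIOS_of_lyapunov (hB : IsBIBS f x)
    (hf : Continuous fun q : EuclideanSpace ℝ (Fin n) × EuclideanSpace ℝ (Fin m) => f q.1 q.2)
    (hV : ContDiff ℝ 1 V) (hα₁ : IsClassKInfty α₁) (hα₂ : IsClassK α₂) (hχ : IsClassK χ)
    (hα₁V : ∀ ξ, α₁ ‖h ξ‖ ≤ V ξ) (hVα₂ : ∀ ξ, V ξ ≤ α₂ ‖ξ‖)
    (hdec : ∀ ξ μ, χ ‖μ‖ < V ξ → fderiv ℝ V ξ (f ξ μ) < 0) : IsIOS h x := by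
  obtain ⟨β, hβ, hVβ⟩ := exists_isClassKL_lyapunov_le hB hf hV hα₂ hχ hVα₂ hdec
  obtain ⟨κ, hκ, hκα₁⟩ := hα₁.exists_inverse
  refine ⟨fun s t => κ (β s t), fun r => κ (2 * χ r + α₂ r), hκ.comp_isClassKL hβ,
    hκ.comp ((hχ.const_mul two_pos).add hα₂), fun ξ u hu hb t ht => ?_⟩
  have hαh := (hα₁V (x t ξ u)).trans (hVβ ξ u t hu hb ht)
  rcases le_max_iff.1 hαh with hle | hle
  · exact le_max_of_le_left (hκα₁ _ _ (norm_nonneg _) hle)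
  · exact le_max_of_le_right (hκα₁ _ _ (norm_nonneg _) hle)

end Sufficiency

/-! ### Smooth series -/

section SmoothSeries

variable {E : Type*} [NormedAddCommGroup E] [NormedSpace ℝ E]

theorem exists_coeff_contDiff_tsum {F : ℕ → E → ℝ} (hF : ∀ k, ContDiff ℝ (⊤ : ℕ∞) (F k))
    (hb : ∀ k i, ∃ R, ∀ x, ‖iteratedFDeriv ℝ i (F k) x‖ ≤ R) :
    ∃ c : ℕ → ℝ, (∀ k, 0 < c k) ∧ ∀ a : ℕ → ℝ, (∀ᶠ k in atTop, |a k| ≤ c k) →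
      ContDiff ℝ (⊤ : ℕ∞) fun x => ∑' k, a k * F k x := by
  choose R hR using hb
  have hR0 : ∀ k i, 0 ≤ R k i := fun k i => (norm_nonneg _).trans (hR k i 0)
  let B : ℕ → ℝ := fun k => 1 + ∑ i ∈ Finset.range (k + 1), R k i
  have hB : ∀ k, 0 < B k := fun k =>
    add_pos_of_pos_of_nonneg one_pos (Finset.sum_nonneg fun i _ => hR0 k i)
  have hRB : ∀ {i k}, i ≤ k → R k i ≤ B k := fun {i k} hik =>
    (Finset.single_le_sum (fun j _ => hR0 k j) (Finset.mem_range_succ_iff.2 hik)).trans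
      (le_add_of_nonneg_left zero_le_one)
  refine ⟨fun k => (1 / 2) ^ k / B k, fun k => div_pos (by positivity) (hB k), fun a ha => ?_⟩
  refine contDiff_tsum_of_eventually (v := fun _ k => (1 / 2 : ℝ) ^ k)
    (fun k => contDiff_const.mul (hF k)) (fun _ _ => summable_geometric_two) fun i _ => ?_
  rw [Nat.cofinite_eq_atTop]
  filter_upwards [ha, eventually_ge_atTop i] with k hk hik x
  calc ‖iteratedFDeriv ℝ i (fun x => a k * F k x) x‖ = |a k| * ‖iteratedFDeriv ℝ i (F k) x‖ := by
        rw [show iteratedFDeriv ℝ i (fun x => a k * F k x) x = a k • iteratedFDeriv ℝ i (F k) x from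
          iteratedFDeriv_const_smul_apply (a := a k) (f := F k)
            ((hF k).of_le (by exact_mod_cast le_top)).contDiffAt,
          norm_smul, Real.norm_eq_abs]
    _ ≤ (1 / 2) ^ k / B k * B k :=
        mul_le_mul hk ((hR k i x).trans (hRB hik)) (norm_nonneg _)
          (div_nonneg (by positivity) (hB k).le)
    _ = (1 / 2) ^ k := div_mul_cancel₀ _ (hB k).ne'

theorem exists_norm_iteratedFDeriv_le_of_hasCompactSupport {F : E → ℝ}
    (hc : HasCompactSupport F) (hF : ContDiff ℝ (⊤ : ℕ∞) F) (i : ℕ) :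
    ∃ R, ∀ x, ‖iteratedFDeriv ℝ i F x‖ ≤ R :=
  (hc.iteratedFDeriv i).exists_bound_of_continuous
    (hF.continuous_iteratedFDeriv (by exact_mod_cast le_top))

theorem exists_coeff_contDiff_tsum_of_finiteDimensional [FiniteDimensional ℝ E] {F : ℕ → E → ℝ}
    (hF : ∀ k, ContDiff ℝ (⊤ : ℕ∞) (F k)) :
    ∃ c : ℕ → ℝ, (∀ k, 0 < c k) ∧ ∀ a : ℕ → ℝ, (∀ k, |a k| ≤ c k) →
      ContDiff ℝ (⊤ : ℕ∞) fun x => ∑' k, a k * F k x := by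
  let b : ℕ → ContDiffBump (0 : E) := fun N => ⟨N + 1, N + 2, by positivity, by linarith⟩
  have hbF : ∀ N k, ContDiff ℝ (⊤ : ℕ∞) fun x => b N x * F k x := fun N k =>
    (b N).contDiff.mul (hF k)
  choose c hc0 hc using fun N => exists_coeff_contDiff_tsum (hbF N) fun k =>
    exists_norm_iteratedFDeriv_le_of_hasCompactSupport (b N).hasCompactSupport.mul_right (hbF N k)
  have hne : ∀ k : ℕ, (Finset.range (k + 1)).Nonempty := fun k => ⟨0, by simp⟩
  refine ⟨fun k => (Finset.range (k + 1)).inf' (hne k) fun N => c N k,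
    fun k => (Finset.lt_inf'_iff _).2 fun N _ => hc0 N k, fun a ha => ?_⟩
  refine contDiff_iff_contDiffAt.2 fun x => ?_
  obtain ⟨N, hN⟩ := exists_nat_gt ‖x‖
  have hcut : ContDiff ℝ (⊤ : ℕ∞) fun x => ∑' k, a k * (b N x * F k x) := by
    refine hc N a ?_
    filter_upwards [eventually_ge_atTop N] with k hk
    exact (ha k).trans (Finset.inf'_le _ (Finset.mem_range_succ_iff.2 hk))
  refine hcut.contDiffAt.congr_of_eventuallyEq ?_
  filter_upwards [continuous_norm.continuousAt.eventually_lt continuousAt_const hN] with y hy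
  have hby : b N y = 1 := (b N).one_of_mem_closedBall <| by
    rw [mem_closedBall_zero_iff]
    exact hy.le.trans (le_add_of_nonneg_right zero_le_one)
  simp only [hby, one_mul]

/-! ### Smooth functions with prescribed smallness -/

theorem exists_seq_contDiff_cover [FiniteDimensional ℝ E] {U : Set E} (hU : IsOpen U) :
    ∃ F : ℕ → E → ℝ, (∀ k, ContDiff ℝ (⊤ : ℕ∞) (F k)) ∧ (∀ k, HasCompactSupport (F k)) ∧
      (∀ k x, 0 ≤ F k x) ∧ (∀ k, tsupport (F k) ⊆ U) ∧ ∀ x ∈ U, ∃ k, 0 < F k x := by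
  rcases U.eq_empty_or_nonempty with rfl | hne
  · exact ⟨0, fun _ => contDiff_const, fun _ => HasCompactSupport.zero, fun _ _ => le_rfl, by simp,
      by simp⟩
  choose! G hGU hGc hG hG01 hG1 using fun x (hx : x ∈ U) =>
    exists_contDiff_tsupport_subset (n := (⊤ : ℕ∞)) (hU.mem_nhds hx)
  obtain ⟨T, hTU, hT, hUT⟩ := TopologicalSpace.countable_cover_nhdsWithin (s := U)
    (f := fun x => {y | 0 < G x y}) fun x hx => mem_nhdsWithin_of_mem_nhds <|
      (hG x hx).continuous.continuousAt.eventually_const_lt (by rw [hG1 x hx]; exact one_pos)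
  have hTne : T.Nonempty := by
    obtain ⟨x, hx⟩ := hne
    obtain ⟨ζ, hζ, -⟩ := mem_iUnion₂.1 (hUT hx)
    exact ⟨ζ, hζ⟩
  obtain ⟨ζ, rfl⟩ := hT.exists_eq_range hTne
  have hζU : ∀ k, ζ k ∈ U := fun k => hTU (mem_range_self k)
  refine ⟨fun k => G (ζ k), fun k => hG _ (hζU k), fun k => hGc _ (hζU k),
    fun k x => (hG01 _ (hζU k) (mem_range_self x)).1, fun k => hGU _ (hζU k), fun x hx => ?_⟩
  simpa using hUT hx

theorem exists_pos_forall_le_of_isCompact {X : Type*} [TopologicalSpace X] {K : Set X}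
    (hK : IsCompact K) {e : X → ℝ} (he : ∀ x ∈ K, ∃ c > 0, ∀ᶠ y in 𝓝 x, c ≤ e y) :
    ∃ c > 0, ∀ y ∈ K, c ≤ e y := by
  refine hK.induction_on ⟨1, one_pos, by simp⟩ (fun s t hst ⟨c, hc, h⟩ => ⟨c, hc, fun y hy =>
    h y (hst hy)⟩) ?_ fun x hx => ?_
  · rintro s t ⟨c, hc, hcs⟩ ⟨d, hd, hdt⟩
    refine ⟨min c d, lt_min hc hd, ?_⟩
    rintro y (hy | hy)
    exacts [(min_le_left _ _).trans (hcs y hy), (min_le_right _ _).trans (hdt y hy)]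
  · obtain ⟨c, hc, hce⟩ := he x hx
    exact ⟨_, mem_nhdsWithin_of_mem_nhds hce, c, hc, fun y hy => hy⟩

theorem exists_pos_mul_norm_le_of_hasCompactSupport {X F : Type*} [TopologicalSpace X]
    [NormedAddCommGroup F] {G : X → F} (hc : HasCompactSupport G) (hG : Continuous G) {e : X → ℝ}
    (he0 : ∀ x, 0 ≤ e x) (he : ∀ x ∈ tsupport G, ∃ c > 0, ∀ᶠ y in 𝓝 x, c ≤ e y) :
    ∃ d > 0, ∀ x, d * ‖G x‖ ≤ e x := by
  obtain ⟨c, hc0, hce⟩ := exists_pos_forall_le_of_isCompact hc.isCompact he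
  obtain ⟨A, hA⟩ := hc.exists_bound_of_continuous hG
  have hA0 : 0 < 1 + |A| := by positivity
  refine ⟨c / (1 + |A|), div_pos hc0 hA0, fun x => ?_⟩
  by_cases hx : x ∈ tsupport G
  · calc c / (1 + |A|) * ‖G x‖ ≤ c / (1 + |A|) * (1 + |A|) := by
          gcongr
          linarith [hA x, le_abs_self A]
      _ = c := div_mul_cancel₀ _ hA0.ne'
      _ ≤ e x := hce x hx
  · rw [image_eq_zero_of_notMem_tsupport hx, norm_zero, mul_zero]
    exact he0 x

theorem tsum_le_and_norm_fderiv_tsum_le {F : ℕ → E → ℝ} (hF : ∀ k, Differentiable ℝ (F k))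
    {w : ℕ → ℝ} (hw : HasSum w 1) {e : E → ℝ} (he1 : ∀ x, e x ≤ 1) (hw0 : ∀ k, 0 ≤ w k)
    (hFe : ∀ k x, ‖F k x‖ ≤ w k * e x) (hDe : ∀ k x, ‖fderiv ℝ (F k) x‖ ≤ w k * e x) (x : E) :
    ∑' k, F k x ≤ e x ∧ ‖fderiv ℝ (fun y => ∑' k, F k y) x‖ ≤ e x := by
  have hwe : HasSum (fun k => w k * e x) (e x) := by simpa using hw.mul_right (e x)
  have hw_le : ∀ k x, w k * e x ≤ w k := fun k x => mul_le_of_le_one_right (hw0 k) (he1 x)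
  refine ⟨(le_abs_self _).trans (tsum_of_norm_bounded hwe fun k => hFe k x), ?_⟩
  rw [fderiv_tsum (x₀ := x) hw.summable hF (fun k y => (hDe k y).trans (hw_le k y))
    (Summable.of_norm_bounded hwe.summable fun k => hFe k x)]
  exact tsum_of_norm_bounded hwe fun k => hDe k x

theorem exists_contDiff_le_and_norm_fderiv_le [FiniteDimensional ℝ E] {U : Set E} (hU : IsOpen U)
    {e : E → ℝ} (he0 : ∀ x, 0 ≤ e x) (he1 : ∀ x, e x ≤ 1)
    (he : ∀ x ∈ U, ∃ c > 0, ∀ᶠ y in 𝓝 x, c ≤ e y) :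
    ∃ δ : E → ℝ, ContDiff ℝ (⊤ : ℕ∞) δ ∧ (∀ x ∈ U, 0 < δ x) ∧ (∀ x ∉ U, δ x = 0) ∧
      ∀ x, δ x ≤ e x ∧ ‖fderiv ℝ δ x‖ ≤ e x := by
  obtain ⟨F, hF, hFc, hF0, hFU, hFpos⟩ := exists_seq_contDiff_cover hU
  have hFd : ∀ k, Differentiable ℝ (F k) := fun k => (hF k).differentiable (by simp)
  obtain ⟨s, hs0, hs⟩ := exists_coeff_contDiff_tsum hF fun k =>
    exists_norm_iteratedFDeriv_le_of_hasCompactSupport (hFc k) (hF k)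
  choose A hA0 hA using fun k => exists_pos_mul_norm_le_of_hasCompactSupport (hFc k)
    (hF k).continuous he0 fun x hx => he x (hFU k hx)
  choose B hB0 hB using fun k => exists_pos_mul_norm_le_of_hasCompactSupport
    ((hFc k).fderiv (𝕜 := ℝ)) ((hF k).continuous_fderiv (by simp)) he0 fun x hx =>
      he x (hFU k (tsupport_fderiv_subset ℝ hx))
  let w : ℕ → ℝ := fun k => 1 / 2 / 2 ^ k
  have hw0 : ∀ k, 0 < w k := fun k => by positivity
  let a : ℕ → ℝ := fun k => min (s k) (w k * min (A k) (B k))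
  have ha0 : ∀ k, 0 < a k := fun k =>
    lt_min (hs0 k) (mul_pos (hw0 k) (lt_min (hA0 k) (hB0 k)))
  have ha_mul : ∀ {k C y z}, min (A k) (B k) ≤ C → 0 ≤ y → C * y ≤ z → a k * y ≤ w k * z :=
    fun {k C y z} hC hy hz => calc
      a k * y ≤ w k * C * y := mul_le_mul_of_nonneg_right ((min_le_right _ _).trans
        (mul_le_mul_of_nonneg_left hC (hw0 k).le)) hy
      _ ≤ w k * z := (mul_assoc _ _ _).trans_le (mul_le_mul_of_nonneg_left hz (hw0 k).le)
  have haF : ∀ k x, ‖a k * F k x‖ ≤ w k * e x := fun k x => by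
    rw [norm_mul, Real.norm_of_nonneg (ha0 k).le]
    exact ha_mul (min_le_left _ _) (norm_nonneg _) (hA k x)
  have haD : ∀ k x, ‖fderiv ℝ (fun y => a k * F k y) x‖ ≤ w k * e x := fun k x => by
    rw [fderiv_const_mul (hFd k x), norm_smul, Real.norm_of_nonneg (ha0 k).le]
    exact ha_mul (min_le_right _ _) (norm_nonneg _) (hB k x)
  have hw : HasSum w 1 := hasSum_geometric_two' 1
  refine ⟨fun x => ∑' k, a k * F k x, hs a (Eventually.of_forall fun k => ?_), fun x hx => ?_,
    fun x hx => ?_, tsum_le_and_norm_fderiv_tsum_le (fun k => (hFd k).const_mul _) hw he1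
      (fun k => (hw0 k).le) haF haD⟩
  · exact (abs_of_pos (ha0 k)).trans_le (min_le_left _ _)
  · obtain ⟨k, hk⟩ := hFpos x hx
    exact (Summable.of_norm_bounded (hw.summable.mul_right (e x)) fun k => haF k x).tsum_pos
      (fun k => mul_nonneg (ha0 k).le (hF0 k x)) k (mul_pos (ha0 k) hk)
  · simp [fun k => image_eq_zero_of_notMem_tsupport fun h => hx (hFU k h)]

theorem exists_contDiff_of_antitone [FiniteDimensional ℝ E] {U : Set E} (hU : IsOpen U)
    {P : E → ℝ → Prop} (hP : ∀ {x c d}, c ≤ d → P x d → P x c)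
    (hloc : ∀ x ∈ U, ∃ c > 0, ∀ᶠ y in 𝓝 x, P y c) :
    ∃ δ : E → ℝ, ContDiff ℝ (⊤ : ℕ∞) δ ∧ (∀ x ∈ U, 0 < δ x) ∧ (∀ x ∉ U, δ x = 0) ∧
      (∀ x, δ x ≤ 1) ∧ ∀ x ∈ U, ∃ c, P x c ∧ δ x ≤ c ∧ ‖fderiv ℝ δ x‖ ≤ c := by
  let S : E → Set ℝ := fun x => {c | 0 < c ∧ c ≤ 1 ∧ P x c}
  have hS : ∀ x, BddAbove (S x) := fun x => ⟨1, fun c hc => hc.2.1⟩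
  have hS0 : ∀ x, 0 ≤ sSup (S x) := fun x => Real.sSup_nonneg fun c hc => hc.1.le
  have hS1 : ∀ x, sSup (S x) ≤ 1 := fun x => Real.sSup_le (fun c hc => hc.2.1) zero_le_one
  have hS_ge : ∀ x ∈ U, ∃ c > 0, ∀ᶠ y in 𝓝 x, c ≤ sSup (S y) := fun x hx => by
    obtain ⟨c, hc, hPc⟩ := hloc x hx
    refine ⟨min c 1, lt_min hc one_pos, hPc.mono fun y hy => le_csSup (hS y) ?_⟩
    exact ⟨lt_min hc one_pos, min_le_right _ _, hP (min_le_left _ _) hy⟩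
  obtain ⟨δ, hδ, hδ0, hδU, hδS⟩ := exists_contDiff_le_and_norm_fderiv_le hU
    (e := fun x => sSup (S x) / 2) (fun x => by linarith [hS0 x]) (fun x => by linarith [hS1 x])
    fun x hx => by
      obtain ⟨c, hc, h⟩ := hS_ge x hx
      exact ⟨c / 2, half_pos hc, h.mono fun y hy => by linarith⟩
  refine ⟨δ, hδ, hδ0, hδU, fun x => by linarith [hδS x, hS1 x], fun x hx => ?_⟩
  have hpos : 0 < sSup (S x) := by
    obtain ⟨c, hc, h⟩ := hS_ge x hx
    exact hc.trans_le h.self_of_nhds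
  have hne : (S x).Nonempty := nonempty_iff_ne_empty.2 fun h => by
    rw [h, Real.sSup_empty] at hpos
    exact hpos.false
  obtain ⟨c, ⟨-, -, hc⟩, hlt⟩ := exists_lt_of_lt_csSup hne (half_lt_self hpos)
  exact ⟨c, hc, (hδS x).1.trans hlt.le, (hδS x).2.trans hlt.le⟩

end SmoothSeries

/-! ### Mollification with variable radius -/

section BumpAverage

open scoped Convolution

variable {E : Type*} [NormedAddCommGroup E] [NormedSpace ℝ E] [FiniteDimensional ℝ E]
  [MeasurableSpace E] [BorelSpace E] (φ : ContDiffBump (0 : E)) (ν : Measure E)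
  [ν.IsAddHaarMeasure]

/-- The average of `k` with respect to the probability density `φ.normed ν`. Mollification of `W`
with variable radius `δ` is `x ↦ bumpAverage φ ν fun z => W (x - δ x • z)`. -/
def bumpAverage (k : E → ℝ) : ℝ := ∫ z, φ.normed ν z * k z ∂ν

variable {φ ν}

theorem normed_eq_zero_of_rOut_lt {z : E} (hz : φ.rOut < ‖z‖) : φ.normed ν z = 0 := by
  rw [← Function.notMem_support, φ.support_normed_eq, mem_ball_zero_iff]
  exact hz.not_gt

theorem integrable_normed_mul {k : E → ℝ} (hk : Continuous k) :
    Integrable (fun z => φ.normed ν z * k z) ν :=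
  (φ.continuous_normed.mul hk).integrable_of_hasCompactSupport
    φ.hasCompactSupport_normed.mul_right

theorem bumpAverage_const (c : ℝ) : bumpAverage φ ν (fun _ => c) = c := by
  rw [bumpAverage, integral_mul_const, φ.integral_normed, one_mul]

theorem bumpAverage_le_add {k l : E → ℝ} (hk : Continuous k) (hl : Continuous l) {c : ℝ}
    (h : ∀ z, ‖z‖ ≤ φ.rOut → k z ≤ l z + c) : bumpAverage φ ν k ≤ bumpAverage φ ν l + c := by
  have hadd : bumpAverage φ ν (fun z => l z + c) = bumpAverage φ ν l + c := by
    simp_rw [bumpAverage, mul_add]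
    rw [integral_add (integrable_normed_mul hl) (integrable_normed_mul continuous_const),
      integral_mul_const, φ.integral_normed, one_mul]
  rw [← hadd]
  refine integral_mono (integrable_normed_mul hk) (integrable_normed_mul (by fun_prop))
    fun z => ?_
  rcases le_or_gt ‖z‖ φ.rOut with hz | hz
  · exact mul_le_mul_of_nonneg_left (h z hz) (φ.nonneg_normed z)
  · simp [normed_eq_zero_of_rOut_lt hz]

theorem bumpAverage_mem_Icc {k : E → ℝ} (hk : Continuous k) {a b : ℝ}
    (h : ∀ z, ‖z‖ ≤ φ.rOut → k z ∈ Icc a b) : bumpAverage φ ν k ∈ Icc a b := by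
  have ha : bumpAverage φ ν (fun _ => a) ≤ bumpAverage φ ν k + 0 :=
    bumpAverage_le_add continuous_const hk fun z hz => (h z hz).1.trans_eq (add_zero _).symm
  have hb : bumpAverage φ ν k ≤ bumpAverage φ ν (fun _ => b) + 0 :=
    bumpAverage_le_add hk continuous_const fun z hz => (h z hz).2.trans_eq (add_zero _).symm
  rw [bumpAverage_const, add_zero] at ha hb
  exact ⟨ha, hb⟩

/-- The dilated density, under which `bumpAverage` becomes a convolution. -/
def dilatedDensity (φ : ContDiffBump (0 : E)) (ν : Measure E) (r : ℝ) (z : E) : ℝ :=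
  (r ^ Module.finrank ℝ E)⁻¹ * φ.normed ν (r⁻¹ • z)

theorem integral_mul_dilatedDensity {r : ℝ} (hr : 0 < r) (k : E → ℝ) :
    ∫ z, k z * dilatedDensity φ ν r z ∂ν = bumpAverage φ ν fun z => k (r • z) := by
  have hcomp := Measure.integral_comp_inv_smul ν (fun z => φ.normed ν z * k (r • z)) r
  simp only [smul_inv_smul₀ hr.ne', abs_of_pos (pow_pos hr _), smul_eq_mul] at hcomp
  rw [bumpAverage, ← inv_mul_cancel_left₀ (pow_pos hr (Module.finrank ℝ E)).ne'
    (∫ z, φ.normed ν z * k (r • z) ∂ν), ← hcomp, ← integral_const_mul]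
  refine integral_congr_ae (Eventually.of_forall fun z => ?_)
  simp only [dilatedDensity]
  ring

theorem contDiffOn_bumpAverage {W δ : E → ℝ} (hW : Continuous W) (hδ : ContDiff ℝ (⊤ : ℕ∞) δ)
    (hδ1 : ∀ x, δ x ≤ 1) :
    ContDiffOn ℝ (⊤ : ℕ∞) (fun x => bumpAverage φ ν fun z => W (x - δ x • z)) {x | 0 < δ x} := by
  set s : Set E := {x | 0 < δ x}
  have hsupp : ∀ x z, x ∈ s → z ∉ Metric.closedBall (0 : E) φ.rOut →
      dilatedDensity φ ν (δ x) z = 0 := fun x z (hx : 0 < δ x) hz => by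
    rw [mem_closedBall_zero_iff, not_le] at hz
    have hlt : φ.rOut < ‖(δ x)⁻¹ • z‖ := by
      rw [norm_smul, Real.norm_of_nonneg (inv_pos.2 hx).le]
      exact hz.trans_le (le_mul_of_one_le_left (norm_nonneg z) ((one_le_inv₀ hx).2 (hδ1 x)))
    rw [dilatedDensity, normed_eq_zero_of_rOut_lt hlt, mul_zero]
  have hsmooth : ContDiffOn ℝ (⊤ : ℕ∞) (Function.uncurry fun x => dilatedDensity φ ν (δ x))
      (s ×ˢ univ) := by
    have hδ' : ContDiffOn ℝ (⊤ : ℕ∞) (fun q : E × E => δ q.1) (s ×ˢ univ) :=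
      (hδ.comp contDiff_fst).contDiffOn
    have hne : ∀ q ∈ s ×ˢ (univ : Set E), δ q.1 ≠ 0 := fun q hq => hq.1.ne'
    exact ((hδ'.pow _).inv fun q hq => pow_ne_zero _ (hne q hq)).mul <|
      φ.contDiff_normed.comp_contDiffOn ((hδ'.inv hne).smul contDiff_snd.contDiffOn)
  have hconv := contDiffOn_convolution_right_with_param_comp (μ := ν)
    (ContinuousLinearMap.mul ℝ ℝ) (contDiffOn_id (s := s)) (isOpen_lt continuous_const
      hδ.continuous) (isCompact_closedBall (0 : E) φ.rOut) hsupp hW.locallyIntegrable hsmooth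
  refine hconv.congr fun x (hx : 0 < δ x) => ?_
  rw [id, convolution_eq_swap]
  exact (integral_mul_dilatedDensity hx fun z => W (x - z)).symm

end BumpAverage

/-! ### Smoothing a locally Lipschitz Lyapunov function -/

section Smoothing

variable {E : Type*} [NormedAddCommGroup E] [NormedSpace ℝ E]

/-- On `N` the function `W` is `L`-Lipschitz and decreases at rate at least `b`, uniformly on `N`,
along every admissible direction `v ∈ 𝓥 x` with `x ∈ N`; these directions are bounded by `M`. -/
structure DecreasesOn (W : E → ℝ) (𝓥 : E → Set E) (N : Set E) (L M : ℝ≥0) (b : ℝ) : Prop where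
  lipschitz : LipschitzOnWith L W N
  norm_le : ∀ x ∈ N, ∀ v ∈ 𝓥 x, ‖v‖ ≤ M
  eventually_le : ∀ x ∈ N, ∀ v ∈ 𝓥 x, ∀ᶠ s in 𝓝[>] (0 : ℝ), ∀ z ∈ N, W (z + s • v) ≤ W z - b * s

/-- Mollification at radius `c` changes the value `W x` by at most a factor `2` and, since a change
of the radius at rate `c * M` costs at most `L * (c * M) < b`, preserves the decrease of `W` along
`𝓥 x`. -/
def IsMollifyRadius (W : E → ℝ) (𝓥 : E → Set E) (x : E) (c : ℝ) : Prop :=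
  (∀ z ∈ Metric.closedBall x c, W x / 2 ≤ W z ∧ W z ≤ 2 * W x) ∧
    ∃ (r : ℝ) (L M : ℝ≥0) (b : ℝ), c < r ∧ L * (c * M) < b ∧
      DecreasesOn W 𝓥 (Metric.ball x r) L M b

variable {W δ : E → ℝ} {𝓥 : E → Set E} {N N' : Set E} {L M : ℝ≥0} {b c d : ℝ} {x v : E}

theorem DecreasesOn.mono (H : DecreasesOn W 𝓥 N L M b) (hN : N' ⊆ N) :
    DecreasesOn W 𝓥 N' L M b where
  lipschitz := H.lipschitz.mono hN
  norm_le x hx := H.norm_le x (hN hx)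
  eventually_le x hx v hv := (H.eventually_le x (hN hx) v hv).mono fun _ hs z hz => hs z (hN hz)

theorem IsMollifyRadius.mono (hcd : c ≤ d) (H : IsMollifyRadius W 𝓥 x d) :
    IsMollifyRadius W 𝓥 x c := by
  obtain ⟨hfac, r, L, M, b, hdr, hb, hdec⟩ := H
  refine ⟨fun z hz => hfac z (Metric.closedBall_subset_closedBall hcd hz), r, L, M, b,
    hcd.trans_lt hdr, lt_of_le_of_lt ?_ hb, hdec⟩
  gcongr

theorem DecreasesOn.exists_isMollifyRadius (hW : ContinuousAt W x) (hx : 0 < W x) (hN : N ∈ 𝓝 x)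
    (hb : 0 < b) (H : DecreasesOn W 𝓥 N L M b) :
    ∃ c > 0, ∀ᶠ y in 𝓝 x, IsMollifyRadius W 𝓥 y c := by
  have hnear : ∀ᶠ y in 𝓝 x, 3 / 4 * W x < W y ∧ W y < 5 / 4 * W x :=
    (hW.eventually_const_lt (by linarith)).and (hW.eventually_lt_const (by linarith))
  obtain ⟨ρ, hρ, hball⟩ := Metric.eventually_nhds_iff_ball.1 (hnear.and hN)
  have hlim : Tendsto (fun c : ℝ => L * (c * M)) (𝓝[>] 0) (𝓝 0) := by
    have hcont : Continuous fun c : ℝ => (L : ℝ) * (c * M) := by fun_prop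
    simpa using (hcont.tendsto 0).mono_left nhdsWithin_le_nhds
  obtain ⟨c, hcb, hcρ, hc⟩ := ((hlim.eventually_lt_const hb).and
    ((eventually_nhdsWithin_of_eventually_nhds (eventually_lt_nhds (half_pos hρ))).and
      self_mem_nhdsWithin)).exists
  refine ⟨c, hc, ?_⟩
  filter_upwards [Metric.ball_mem_nhds x (half_pos hρ)] with y hy
  have hsub : Metric.ball y (ρ / 2) ⊆ Metric.ball x ρ := Metric.ball_subset_ball' (by
    linarith [Metric.mem_ball.1 hy])
  obtain ⟨hy1, hy2⟩ := (hball y (hsub (Metric.mem_ball_self (half_pos hρ)))).1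
  refine ⟨fun z hz => ?_, ρ / 2, L, M, b, hcρ, hcb, H.mono fun z hz => (hball z (hsub hz)).2⟩
  obtain ⟨hz1, hz2⟩ := (hball z (hsub (Metric.closedBall_subset_ball hcρ hz))).1
  constructor <;> linarith

theorem DecreasesOn.eventually_sub_smul_le {r : ℝ} (H : DecreasesOn W 𝓥 (Metric.ball x r) L M b)
    (hδ : ContinuousAt δ x) (hδ0 : 0 ≤ δ x) (hδr : δ x < r) (hv : v ∈ 𝓥 x) :
    ∀ᶠ s in 𝓝[>] (0 : ℝ), ∀ z : E, ‖z‖ ≤ 1 → W (x + s • v - δ (x + s • v) • z) ≤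
      W (x - δ x • z) + (L * |δ (x + s • v) - δ x| - b * s) := by
  have hlim : Tendsto (fun s : ℝ => x + s • v) (𝓝[>] 0) (𝓝 x) := by
    have hcont : Continuous fun s : ℝ => x + s • v := by fun_prop
    simpa using (hcont.tendsto 0).mono_left nhdsWithin_le_nhds
  have hsmall : ∀ᶠ s in 𝓝[>] (0 : ℝ), ‖s • v‖ + |δ (x + s • v)| < r ∧ ‖s • v‖ + |δ x| < r := by
    have hs : Tendsto (fun s : ℝ => ‖s • v‖) (𝓝[>] 0) (𝓝 0) := by
      simpa using (hlim.sub_const x).norm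
    have hmoved := hs.add (hδ.tendsto.comp hlim).abs
    have hfixed := hs.add_const |δ x|
    rw [zero_add, abs_of_nonneg hδ0] at hmoved hfixed
    rw [abs_of_nonneg hδ0]
    exact (hmoved.eventually_lt_const hδr).and (hfixed.eventually_lt_const hδr)
  have hr : 0 < r := hδ0.trans_lt hδr
  filter_upwards [H.eventually_le x (Metric.mem_ball_self hr) v hv, hsmall]
    with s hs ⟨hmoved, hfixed⟩ z hz
  have hsmul : ∀ a : ℝ, ‖a • z‖ ≤ |a| := fun a =>
    (norm_smul a z).trans_le (mul_le_of_le_one_right (abs_nonneg a) hz)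
  have hmem {a : ℝ} (ha : ‖s • v‖ + |a| < r) : x + s • v - a • z ∈ Metric.ball x r := by
    rw [mem_ball_iff_norm, add_sub_assoc, add_sub_cancel_left]
    exact ((norm_sub_le _ _).trans (by gcongr; exact hsmul a)).trans_lt ha
  have hdec : W (x + s • v - δ x • z) ≤ W (x - δ x • z) - b * s := by
    rw [add_sub_right_comm]
    refine hs _ ?_
    rw [mem_ball_iff_norm, sub_sub_cancel_left, norm_neg]
    exact (hsmul _).trans_lt ((abs_of_nonneg hδ0).trans_lt hδr)
  have hlip := (le_abs_self _).trans (H.lipschitz.norm_sub_le (hmem hmoved) (hmem hfixed))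
  rw [sub_sub_sub_cancel_left, ← sub_smul] at hlip
  have hrad : L * ‖(δ x - δ (x + s • v)) • z‖ ≤ L * |δ (x + s • v) - δ x| := by
    rw [abs_sub_comm]
    exact mul_le_mul_of_nonneg_left (hsmul _) L.2
  linarith

theorem fderiv_neg_of_eventually_le {g : E → ℝ} (hg : DifferentiableAt ℝ g x)
    (hδ : DifferentiableAt ℝ δ x) (hb : L * |fderiv ℝ δ x v| < b)
    (h : ∀ᶠ s in 𝓝[>] (0 : ℝ), g (x + s • v) ≤ g x + (L * |δ (x + s • v) - δ x| - b * s)) :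
    fderiv ℝ g x v < 0 := by
  have hg' := (hg.hasFDerivAt.hasLineDerivAt v).tendsto_slope_zero_right
  have hδ' := ((hδ.hasFDerivAt.hasLineDerivAt v).tendsto_slope_zero_right.abs.const_mul
    (L : ℝ)).sub_const b
  refine (le_of_tendsto_of_tendsto hg' hδ' ?_).trans_lt (by linarith)
  filter_upwards [h, self_mem_nhdsWithin] with s hs (hs0 : 0 < s)
  rw [smul_eq_mul, inv_mul_le_iff₀ hs0, smul_eq_mul, abs_mul, abs_of_pos (inv_pos.2 hs0)]
  calc g (x + s • v) - g x ≤ L * |δ (x + s • v) - δ x| - b * s := by linarith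
    _ = s * (L * (s⁻¹ * |δ (x + s • v) - δ x|) - b) := by field_simp

theorem exists_contDiffOn_fderiv_neg [FiniteDimensional ℝ E] (hW : Continuous W)
    (hW0 : ∀ x, 0 ≤ W x) (hdec : ∀ x, 0 < W x →
      ∃ N ∈ 𝓝 x, ∃ (L M : ℝ≥0) (b : ℝ), 0 < b ∧ DecreasesOn W 𝓥 N L M b) :
    ∃ g : E → ℝ, ContDiffOn ℝ (⊤ : ℕ∞) g {x | 0 < W x} ∧ (∀ x, W x / 2 ≤ g x ∧ g x ≤ 2 * W x) ∧
      ∀ x, 0 < W x → ∀ v ∈ 𝓥 x, fderiv ℝ g x v < 0 := by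
  borelize E
  let φ : ContDiffBump (0 : E) := ⟨1 / 2, 1, by norm_num, by norm_num⟩
  have hU : IsOpen {x | 0 < W x} := isOpen_lt continuous_const hW
  obtain ⟨δ, hδ, hδpos, hδzero, hδ1, hδP⟩ := exists_contDiff_of_antitone hU
    (P := IsMollifyRadius W 𝓥) (fun hcd H => H.mono hcd) fun x hx => by
      obtain ⟨N, hN, L, M, b, hb, H⟩ := hdec x hx
      exact H.exists_isMollifyRadius hW.continuousAt hx hN hb
  have hk : ∀ x, Continuous fun z => W (x - δ x • z) := fun x => by fun_prop
  have hsmooth := (contDiffOn_bumpAverage (φ := φ) (ν := Measure.addHaar) hW hδ hδ1).mono hδpos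
  refine ⟨_, hsmooth, fun x => ?_, fun x hx v hv => ?_⟩
  · by_cases hx : 0 < W x
    · obtain ⟨c, ⟨hfac, -⟩, hδc, -⟩ := hδP x hx
      refine bumpAverage_mem_Icc (hk x) fun z hz => hfac _ ?_
      rw [mem_closedBall_iff_norm, sub_sub_cancel_left, norm_neg, norm_smul,
        Real.norm_of_nonneg (hδpos x hx).le]
      exact (mul_le_of_le_one_right (hδpos x hx).le hz).trans hδc
    · simp [hδzero x hx, bumpAverage_const, le_antisymm (not_lt.1 hx) (hW0 x)]
  · obtain ⟨c, ⟨-, r, L, M, b, hcr, hb, H⟩, hδc, hDδ⟩ := hδP x hx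
    have hδd : DifferentiableAt ℝ δ x := hδ.differentiable (by simp) x
    have hr : x ∈ Metric.ball x r := Metric.mem_ball_self ((hδpos x hx).trans_le hδc |>.trans hcr)
    refine fderiv_neg_of_eventually_le (b := b) (L := L)
      ((hsmooth.contDiffAt (hU.mem_nhds hx)).differentiableAt (by simp)) hδd ?_ ?_
    · refine lt_of_le_of_lt (mul_le_mul_of_nonneg_left ?_ L.2) hb
      exact (fderiv ℝ δ x).le_of_opNorm_le_of_le hDδ (H.norm_le x hr v hv)
    · filter_upwards [H.eventually_sub_smul_le hδ.continuous.continuousAt (hδpos x hx).le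
        (hδc.trans_lt hcr) hv] with s hs
      exact bumpAverage_le_add (hk _) (hk x) hs

end Smoothing

/-! ### The supremum of the weighted output excess -/

/-- How far an output of magnitude `y` exceeds the gain `γ r` of an input of size `r`: it is `0` as
long as `y ≤ γ r` and equal to `y` from `y = 2 * γ r` on, so that large outputs count in full. -/
def outputExcess (γ : ℝ → ℝ) (y r : ℝ) : ℝ := min y (max 0 (2 * (y - γ r)))

/-- An increasing weight with values in `[1, 2]`. -/
def timeWeight (t : ℝ) : ℝ := 2 - 1 / (1 + t)

section Weights

variable {γ : ℝ → ℝ} {y r : ℝ}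

theorem outputExcess_le : outputExcess γ y r ≤ y := min_le_left _ _

theorem outputExcess_nonneg (hy : 0 ≤ y) : 0 ≤ outputExcess γ y r :=
  le_min hy (le_max_left _ _)

theorem lt_of_outputExcess_pos (h : 0 < outputExcess γ y r) : γ r < y := by
  have hmax : 0 < max 0 (2 * (y - γ r)) := h.trans_le (min_le_right _ _)
  have hsub : 0 < 2 * (y - γ r) := by simpa using hmax
  linarith

theorem outputExcess_eq (h : 2 * γ r ≤ y) : outputExcess γ y r = y :=
  min_eq_left (le_max_of_le_right (by linarith))

theorem outputExcess_le_max {r' : ℝ} (h : 2 * γ r' ≤ outputExcess γ y r) :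
    outputExcess γ y r ≤ outputExcess γ y (max r r') := by
  rcases le_total r' r with hr | hr
  · rw [max_eq_left hr]
  · rw [max_eq_right hr, outputExcess_eq (h.trans outputExcess_le)]
    exact outputExcess_le

theorem outputExcess_le_add (y z r : ℝ) :
    outputExcess γ y r ≤ outputExcess γ z r + 2 * |y - z| := by
  have hle := le_abs_self (y - z)
  have hnonneg := abs_nonneg (y - z)
  unfold outputExcess
  rw [← min_add_add_right, ← max_add_add_right]
  exact min_le_min (by linarith) (max_le_max (by linarith) (by linarith))

theorem one_le_timeWeight {t : ℝ} (ht : 0 ≤ t) : 1 ≤ timeWeight t := by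
  have : 1 / (1 + t) ≤ 1 := by
    rw [div_le_one (by linarith)]
    linarith
  unfold timeWeight
  linarith

theorem timeWeight_le_two {t : ℝ} (ht : 0 ≤ t) : timeWeight t ≤ 2 := by
  have : 0 ≤ 1 / (1 + t) := by positivity
  unfold timeWeight
  linarith

theorem timeWeight_pos {t : ℝ} (ht : 0 ≤ t) : 0 < timeWeight t :=
  zero_lt_one.trans_le (one_le_timeWeight ht)

theorem timeWeight_zero : timeWeight 0 = 1 := by norm_num [timeWeight]

theorem exists_timeWeight_le_mul {T : ℝ} (hT : 0 ≤ T) :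
    ∃ a, 0 < a ∧ a ≤ 1 ∧ ∀ t s, 0 ≤ t → t ≤ T → 0 ≤ s → s ≤ 1 →
      timeWeight t ≤ timeWeight (t + s) * (1 - a * s) := by
  refine ⟨1 / (2 * (T + 2) ^ 2), by positivity, ?_, fun t s ht htT hs hs1 => ?_⟩
  · rw [div_le_one (by positivity)]
    nlinarith
  have hincr : timeWeight (t + s) - timeWeight t = s / ((1 + t) * (1 + (t + s))) := by
    unfold timeWeight
    field_simp
    ring
  have hloss : timeWeight (t + s) * (1 / (2 * (T + 2) ^ 2) * s) ≤
      s / ((1 + t) * (1 + (t + s))) :=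
    calc timeWeight (t + s) * (1 / (2 * (T + 2) ^ 2) * s)
        ≤ 2 * (1 / (2 * (T + 2) ^ 2) * s) :=
          mul_le_mul_of_nonneg_right (timeWeight_le_two (by positivity)) (by positivity)
      _ = s / (T + 2) ^ 2 := by field_simp
      _ ≤ s / ((1 + t) * (1 + (t + s))) :=
          div_le_div_of_nonneg_left hs (by positivity) (by nlinarith)
  linarith

theorem max_mul_one_sub_le {v w c : ℝ} (hv : 0 ≤ v) (hw : 3 / 4 * v ≤ w) (hc0 : 0 ≤ c)
    (hc : c ≤ 1 / 6) : max (5 / 8 * v) (w * (1 - c)) ≤ w - 3 / 4 * v * c :=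
  max_le (by nlinarith) (by nlinarith)

end Weights

section SupLyapunov

variable {n m p : ℕ}
  {f : EuclideanSpace ℝ (Fin n) → EuclideanSpace ℝ (Fin m) → EuclideanSpace ℝ (Fin n)}
  {h : EuclideanSpace ℝ (Fin n) → EuclideanSpace ℝ (Fin p)}
  {x : ℝ → EuclideanSpace ℝ (Fin n) → (ℝ → EuclideanSpace ℝ (Fin m)) → EuclideanSpace ℝ (Fin n)}
  {β : ℝ → ℝ → ℝ} {γ : ℝ → ℝ} {ξ : EuclideanSpace ℝ (Fin n)}
  {u : ℝ → EuclideanSpace ℝ (Fin m)} {r t R ε : ℝ}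

theorem IsBIBS.exists_lipschitz_output (hB : IsBIBS f x)
    (hf : LocallyLipschitz fun q : EuclideanSpace ℝ (Fin n) × EuclideanSpace ℝ (Fin m) =>
      f q.1 q.2) (hh : LocallyLipschitz h) (R r T : ℝ) :
    ∃ L, 0 ≤ L ∧ ∀ ξ η u t, ‖ξ‖ ≤ R → ‖η‖ ≤ R → IsInputBoundedBy u r → 0 ≤ t → t ≤ T →
      |‖h (x t ξ u)‖ - ‖h (x t η u)‖| ≤ L * ‖ξ - η‖ := by
  obtain ⟨L, hL0, hL⟩ := hB.exists_lipschitz_flow hf R r T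
  obtain ⟨R', hR'⟩ := hB.exists_norm_le R r
  obtain ⟨K, hK0, hK⟩ := exists_norm_sub_le_of_locallyLipschitz (f := fun a (_ : ℝ) => h a)
    (hh.comp LipschitzWith.prod_fst.locallyLipschitz) R' 0
  have hbound : ∀ ξ u t, ‖ξ‖ ≤ R → IsInputBoundedBy u r → 0 ≤ t → ‖x t ξ u‖ ≤ R' :=
    fun ξ u t hξ hu ht => hR' ξ u t hξ hu.isInput hu.bddInput hu.uNorm_le ht
  refine ⟨K * L, by positivity, fun ξ η u t hξ hη hu ht htT => ?_⟩
  calc |‖h (x t ξ u)‖ - ‖h (x t η u)‖| ≤ ‖h (x t ξ u) - h (x t η u)‖ := abs_norm_sub_norm_le _ _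
    _ ≤ K * ‖x t ξ u - x t η u‖ :=
        hK _ _ 0 (hbound ξ u t hξ hu ht) (hbound η u t hη hu ht) (by simp)
    _ ≤ K * (L * ‖ξ - η‖) := by gcongr; exact hL ξ η u t hξ hη hu ht htT
    _ = K * L * ‖ξ - η‖ := (mul_assoc _ _ _).symm

/-- The supremum over all trajectories starting at `ξ` of the output excess, weighted by
`timeWeight`. The bound `r` on the input is a separate parameter rather than `uNorm u`, so that it
can be enlarged when inputs are concatenated. -/
def supLyapunov (γ : ℝ → ℝ) (h : EuclideanSpace ℝ (Fin n) → EuclideanSpace ℝ (Fin p))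
    (x : ℝ → EuclideanSpace ℝ (Fin n) → (ℝ → EuclideanSpace ℝ (Fin m)) →
      EuclideanSpace ℝ (Fin n)) (ξ : EuclideanSpace ℝ (Fin n)) : ℝ :=
  sSup {v | ∃ t r u, 0 ≤ t ∧ IsInputBoundedBy u r ∧
    v = outputExcess γ ‖h (x t ξ u)‖ r * timeWeight t}

theorem supLyapunov_le {c : ℝ} (hc : ∀ t r u, 0 ≤ t → IsInputBoundedBy u r →
    outputExcess γ ‖h (x t ξ u)‖ r * timeWeight t ≤ c) : supLyapunov γ h x ξ ≤ c := by
  refine csSup_le ⟨_, 0, _, _, le_rfl, .const 0, rfl⟩ ?_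
  rintro _ ⟨t, r, u, ht, hu, rfl⟩
  exact hc t r u ht hu

/-- The output estimate in the definition of input-to-output stability, for measurable inputs
bounded everywhere by `r`, with a gain that dominates the identity. -/
structure OutputEstimate (h : EuclideanSpace ℝ (Fin n) → EuclideanSpace ℝ (Fin p))
    (x : ℝ → EuclideanSpace ℝ (Fin n) → (ℝ → EuclideanSpace ℝ (Fin m)) →
      EuclideanSpace ℝ (Fin n)) (β : ℝ → ℝ → ℝ) (γ : ℝ → ℝ) : Prop where
  isClassKL : IsClassKL β
  isClassK : IsClassK γ
  le_gain : ∀ r, 0 ≤ r → r ≤ γ r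
  norm_le : ∀ ξ u r t, IsInputBoundedBy u r → 0 ≤ t → ‖h (x t ξ u)‖ ≤ max (β ‖ξ‖ t) (γ r)

theorem IsIOS.exists_outputEstimate (hI : IsIOS h x) : ∃ β γ, OutputEstimate h x β γ := by
  obtain ⟨β, γ, hβ, hγ, hI⟩ := hI
  refine ⟨β, fun r => γ r + r, hβ, hγ.add_id.1, fun r hr => by linarith [hγ.nonneg hr],
    fun ξ u r t hu ht => ?_⟩
  refine (hI ξ u hu.isInput hu.bddInput t ht).trans (max_le_max le_rfl ?_)
  linarith [hγ.mono uNorm_nonneg hu.uNorm_le, hu.nonneg]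

namespace OutputEstimate

theorem outputExcess_le_beta (H : OutputEstimate h x β γ) (hu : IsInputBoundedBy u r)
    (ht : 0 ≤ t) : outputExcess γ ‖h (x t ξ u)‖ r ≤ β ‖ξ‖ t := by
  rcases le_or_gt (outputExcess γ ‖h (x t ξ u)‖ r) 0 with hle | hpos
  · exact hle.trans (H.isClassKL.nonneg (norm_nonneg ξ) ht)
  · rcases le_max_iff.1 (H.norm_le ξ u r t hu ht) with hβ | hγ
    · exact outputExcess_le.trans hβ
    · exact absurd (lt_of_outputExcess_pos hpos) hγ.not_gt

theorem weighted_le_beta (H : OutputEstimate h x β γ) (hu : IsInputBoundedBy u r) (ht : 0 ≤ t) :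
    outputExcess γ ‖h (x t ξ u)‖ r * timeWeight t ≤ 2 * β ‖ξ‖ t := by
  rw [mul_comm 2]
  exact mul_le_mul (H.outputExcess_le_beta hu ht) (timeWeight_le_two ht) (timeWeight_pos ht).le
    (H.isClassKL.nonneg (norm_nonneg ξ) ht)

theorem weighted_le_beta_zero (H : OutputEstimate h x β γ) (hu : IsInputBoundedBy u r)
    (ht : 0 ≤ t) : outputExcess γ ‖h (x t ξ u)‖ r * timeWeight t ≤ 2 * β ‖ξ‖ 0 :=
  (H.weighted_le_beta hu ht).trans <| mul_le_mul_of_nonneg_left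
    (H.isClassKL.mono (norm_nonneg ξ) le_rfl le_rfl ht) zero_le_two

theorem weighted_le_supLyapunov (H : OutputEstimate h x β γ) (hu : IsInputBoundedBy u r)
    (ht : 0 ≤ t) : outputExcess γ ‖h (x t ξ u)‖ r * timeWeight t ≤ supLyapunov γ h x ξ := by
  refine le_csSup ⟨2 * β ‖ξ‖ 0, ?_⟩ ⟨t, r, u, ht, hu, rfl⟩
  rintro _ ⟨t, r, u, ht, hu, rfl⟩
  exact H.weighted_le_beta_zero hu ht

theorem supLyapunov_le_beta (H : OutputEstimate h x β γ) (ξ : EuclideanSpace ℝ (Fin n)) :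
    supLyapunov γ h x ξ ≤ 2 * β ‖ξ‖ 0 :=
  supLyapunov_le fun _ _ _ ht hu => H.weighted_le_beta_zero hu ht

theorem norm_le_supLyapunov (H : OutputEstimate h x β γ) (hx : IsSolutionMap f x)
    (ξ : EuclideanSpace ℝ (Fin n)) : ‖h ξ‖ ≤ supLyapunov γ h x ξ := by
  have hu : IsInputBoundedBy (fun _ => (0 : EuclideanSpace ℝ (Fin m))) 0 := by
    simpa using IsInputBoundedBy.const (0 : EuclideanSpace ℝ (Fin m))
  simpa [hx.apply_zero hu.isInput, timeWeight_zero, outputExcess_eq, H.isClassK.2.2] using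
    H.weighted_le_supLyapunov (ξ := ξ) hu le_rfl

theorem supLyapunov_nonneg (H : OutputEstimate h x β γ) (hx : IsSolutionMap f x)
    (ξ : EuclideanSpace ℝ (Fin n)) : 0 ≤ supLyapunov γ h x ξ :=
  (norm_nonneg _).trans (H.norm_le_supLyapunov hx ξ)

theorem exists_horizon (H : OutputEstimate h x β γ) (R : ℝ) (hε : 0 < ε) :
    ∃ T, 0 ≤ T ∧ ∀ ξ u r t, ‖ξ‖ ≤ R → IsInputBoundedBy u r → 0 ≤ t →
      ε < outputExcess γ ‖h (x t ξ u)‖ r * timeWeight t → t ≤ T ∧ r ≤ β R 0 := by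
  rcases lt_or_ge R 0 with hR | hR
  · exact ⟨0, le_rfl, fun ξ _ _ _ hξ => absurd hR (not_lt.2 ((norm_nonneg ξ).trans hξ))⟩
  obtain ⟨T, hβT, hT⟩ := (((H.isClassKL.2 R hR).2.eventually_lt_const (half_pos hε)).and
    (eventually_ge_atTop 0)).exists
  refine ⟨T, hT, fun ξ u r t hξ hu ht hε' => ⟨?_, ?_⟩⟩
  · by_contra! htT
    linarith [H.weighted_le_beta (ξ := ξ) hu ht,
      H.isClassKL.mono (norm_nonneg ξ) hξ hT htT.le]
  · have hγ := lt_of_outputExcess_pos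
      (pos_of_mul_pos_left (hε.trans hε') (timeWeight_pos ht).le)
    have hrγ := H.le_gain r hu.nonneg
    rcases le_max_iff.1 (H.norm_le ξ u r t hu ht) with hβ | hβ
    · linarith [H.isClassKL.mono (norm_nonneg ξ) hξ le_rfl ht]
    · linarith

theorem exists_supLyapunov_le_add (H : OutputEstimate h x β γ)
    (hf : LocallyLipschitz fun q : EuclideanSpace ℝ (Fin n) × EuclideanSpace ℝ (Fin m) =>
      f q.1 q.2) (hh : LocallyLipschitz h) (hB : IsBIBS f x) (R : ℝ) (hε : 0 < ε) :
    ∃ L, 0 ≤ L ∧ ∀ ξ η, ‖ξ‖ ≤ R → ‖η‖ ≤ R →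
      supLyapunov γ h x ξ ≤ max (supLyapunov γ h x η) ε + L * ‖ξ - η‖ := by
  obtain ⟨T, -, hT⟩ := H.exists_horizon R hε
  obtain ⟨L, hL0, hL⟩ := hB.exists_lipschitz_output hf hh R (β R 0) T
  refine ⟨4 * L, by positivity, fun ξ η hξ hη => supLyapunov_le fun t r u ht hu => ?_⟩
  rcases le_or_gt (outputExcess γ ‖h (x t ξ u)‖ r * timeWeight t) ε with hJε | hJε
  · exact (hJε.trans (le_max_right _ _)).trans (le_add_of_nonneg_right (by positivity))
  obtain ⟨htT, hr⟩ := hT ξ u r t hξ hu ht hJε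
  have hout := hL ξ η u t hξ hη (hu.mono hr) ht htT
  have hw := (timeWeight_pos ht).le
  calc outputExcess γ ‖h (x t ξ u)‖ r * timeWeight t
      ≤ (outputExcess γ ‖h (x t η u)‖ r + 2 * (L * ‖ξ - η‖)) * timeWeight t := by
        gcongr
        exact (outputExcess_le_add _ ‖h (x t η u)‖ r).trans (by gcongr)
    _ = outputExcess γ ‖h (x t η u)‖ r * timeWeight t + 2 * (L * ‖ξ - η‖) * timeWeight t :=
        add_mul _ _ _
    _ ≤ supLyapunov γ h x η + 2 * (L * ‖ξ - η‖) * 2 := by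
        gcongr
        exacts [H.weighted_le_supLyapunov hu ht, timeWeight_le_two ht]
    _ ≤ max (supLyapunov γ h x η) ε + 4 * L * ‖ξ - η‖ := by
        linarith [le_max_left (supLyapunov γ h x η) ε]

theorem continuous_supLyapunov (H : OutputEstimate h x β γ)
    (hf : LocallyLipschitz fun q : EuclideanSpace ℝ (Fin n) × EuclideanSpace ℝ (Fin m) =>
      f q.1 q.2) (hh : LocallyLipschitz h) (hB : IsBIBS f x) :
    Continuous (supLyapunov γ h x) := by
  have hnn := H.supLyapunov_nonneg hB.1
  refine continuous_iff_continuousAt.2 fun ξ => Metric.tendsto_nhds.2 fun e he => ?_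
  obtain ⟨L, -, hL⟩ := H.exists_supLyapunov_le_add hf hh hB (‖ξ‖ + 1) (half_pos he)
  have hnorm : ∀ᶠ η in 𝓝 ξ, ‖η‖ < ‖ξ‖ + 1 :=
    continuous_norm.continuousAt.eventually_lt_const (lt_add_one _)
  have hdist : ∀ᶠ η in 𝓝 ξ, L * ‖η - ξ‖ < e / 2 :=
    Tendsto.eventually_lt_const (half_pos he) <| by
      simpa using (by fun_prop : Continuous fun η => L * ‖η - ξ‖).tendsto ξ
  filter_upwards [hnorm, hdist] with η hη hd
  have hηξ := hL η ξ hη.le (lt_add_one _).le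
  have hξη := hL ξ η (lt_add_one _).le hη.le
  rw [norm_sub_rev] at hξη
  have hmax : ∀ a, 0 ≤ a → max a (e / 2) ≤ a + e / 2 := fun a ha =>
    max_le (by linarith) (by linarith)
  rw [Real.dist_eq, abs_lt]
  constructor <;> linarith [hmax _ (hnn ξ), hmax _ (hnn η)]

-- An excess of `v` along the trajectory from `x s ζ μ` is, up to a shift of time by `s`, an
-- excess of the concatenation of `μ` and `v` along the trajectory from `ζ`; the shift increases
-- the weight.
theorem exists_supLyapunov_trajectory_le (H : OutputEstimate h x β γ)
    (hf : LocallyLipschitz fun q : EuclideanSpace ℝ (Fin n) × EuclideanSpace ℝ (Fin m) =>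
      f q.1 q.2) (hB : IsBIBS f x) (R : ℝ) (hε : 0 < ε) :
    ∃ a, 0 < a ∧ ∀ ζ μ s, ‖ζ‖ ≤ R → 4 * γ ‖μ‖ ≤ ε → 0 ≤ s → s ≤ 1 →
      supLyapunov γ h x (x s ζ fun _ => μ) ≤ max ε (supLyapunov γ h x ζ * (1 - a * s)) := by
  obtain ⟨R', hR'⟩ := hB.exists_norm_le R ε
  obtain ⟨T, hT0, hT⟩ := H.exists_horizon R' hε
  obtain ⟨a, ha0, ha1, ha⟩ := exists_timeWeight_le_mul hT0
  refine ⟨a, ha0, fun ζ μ s hζ hμ hs hs1 => supLyapunov_le fun t r v ht hv => ?_⟩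
  have hu := IsInputBoundedBy.const μ
  have hμε : ‖μ‖ ≤ ε := by linarith [H.le_gain _ (norm_nonneg μ), norm_nonneg μ]
  have hxR := hR' ζ _ s hζ hu.isInput hu.bddInput (hu.uNorm_le.trans hμε) hs
  rcases le_or_gt (outputExcess γ ‖h (x t (x s ζ fun _ => μ) v)‖ r * timeWeight t) ε with hJε | hJε
  · exact le_max_of_le_left hJε
  have htT := (hT _ v r t hxR hv ht hJε).1
  have hu' := hu.mono (le_max_right r ‖μ‖)
  have hv' := hv.mono (le_max_left r ‖μ‖)
  have hval := H.weighted_le_supLyapunov (ξ := ζ) (hu'.concat hv' (τ := s)) (add_nonneg ht hs)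
  rw [hB.apply_concatInput hf hu' hv' ζ hs ht] at hval
  set y := ‖h (x t (x s ζ fun _ => μ) v)‖
  have hy0 : 0 ≤ y := norm_nonneg _
  have hexcess : outputExcess γ y r ≤ outputExcess γ y (max r ‖μ‖) := by
    refine outputExcess_le_max ?_
    nlinarith [timeWeight_le_two ht, outputExcess_nonneg (γ := γ) (r := r) hy0]
  refine le_max_of_le_right ?_
  calc outputExcess γ y r * timeWeight t
      ≤ outputExcess γ y (max r ‖μ‖) * (timeWeight (t + s) * (1 - a * s)) :=
        mul_le_mul hexcess (ha t s ht htT hs hs1) (timeWeight_pos ht).le (outputExcess_nonneg hy0)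
    _ = outputExcess γ y (max r ‖μ‖) * timeWeight (t + s) * (1 - a * s) := (mul_assoc _ _ _).symm
    _ ≤ _ := mul_le_mul_of_nonneg_right hval (sub_nonneg.2 (mul_le_one₀ ha1 hs hs1))

theorem exists_supLyapunov_add_smul_le (H : OutputEstimate h x β γ)
    (hf : LocallyLipschitz fun q : EuclideanSpace ℝ (Fin n) × EuclideanSpace ℝ (Fin m) =>
      f q.1 q.2) (hh : LocallyLipschitz h) (hB : IsBIBS f x) (R : ℝ) (hε : 0 < ε) :
    ∃ a M C, 0 < a ∧ 0 ≤ M ∧ 0 ≤ C ∧ ∀ ξ ζ μ, ‖ξ‖ ≤ R → ‖ζ‖ ≤ R → 4 * γ ‖μ‖ ≤ ε →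
      ‖f ξ μ‖ ≤ M ∧ ∀ s, 0 ≤ s → s ≤ 1 → M * s ≤ 1 → supLyapunov γ h x (ζ + s • f ξ μ) ≤
        max ε (supLyapunov γ h x ζ * (1 - a * s)) + C * (M * s + ‖ζ - ξ‖) * s := by
  obtain ⟨L, hL0, hL⟩ := H.exists_supLyapunov_le_add hf hh hB (R + 1) hε
  obtain ⟨a, ha, hdecay⟩ := H.exists_supLyapunov_trajectory_le hf hB R hε
  obtain ⟨M, K, hM0, hK0, hMK⟩ := hB.exists_first_order_expansion hf R ε
  refine ⟨a, M, L * K, ha, hM0, by positivity, fun ξ ζ μ hξ hζ hμ => ?_⟩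
  have hμε : ‖μ‖ ≤ ε := by linarith [H.le_gain _ (norm_nonneg μ), norm_nonneg μ]
  refine ⟨(hMK ξ ζ μ 0 hξ hζ hμε le_rfl).1, fun s hs hs1 hMs => ?_⟩
  obtain ⟨hfM, hq, hexp⟩ := hMK ξ ζ μ s hξ hζ hμε hs
  set q := x s ζ fun _ => μ
  have hqR : ‖q‖ ≤ R + 1 := by linarith [norm_le_norm_add_norm_sub' q ζ]
  have hyR : ‖ζ + s • f ξ μ‖ ≤ R + 1 := by
    refine (norm_add_le _ _).trans (add_le_add hζ ?_)
    rw [norm_smul, Real.norm_of_nonneg hs, mul_comm]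
    exact (mul_le_mul_of_nonneg_right hfM hs).trans hMs
  rw [sub_sub, norm_sub_rev] at hexp
  calc supLyapunov γ h x (ζ + s • f ξ μ)
      ≤ max (supLyapunov γ h x q) ε + L * ‖ζ + s • f ξ μ - q‖ := hL _ _ hyR hqR
    _ ≤ max ε (supLyapunov γ h x ζ * (1 - a * s)) + L * (K * (M * s + ‖ζ - ξ‖) * s) := by
        refine add_le_add ?_ (mul_le_mul_of_nonneg_left hexp hL0)
        exact max_le (hdecay ζ μ s hζ hμ hs hs1) (le_max_left _ _)
    _ = _ := by ring

theorem exists_supLyapunov_near (H : OutputEstimate h x β γ)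
    (hf : LocallyLipschitz fun q : EuclideanSpace ℝ (Fin n) × EuclideanSpace ℝ (Fin m) =>
      f q.1 q.2) (hh : LocallyLipschitz h) (hB : IsBIBS f x) (hξ : 0 < supLyapunov γ h x ξ)
    (C : ℝ) {b : ℝ} (hb : 0 < b) :
    ∃ ρ, 0 < ρ ∧ ρ ≤ 1 ∧ C * (3 * ρ) ≤ b ∧ ∀ η ∈ Metric.ball ξ ρ,
      3 / 4 * supLyapunov γ h x ξ < supLyapunov γ h x η ∧
      supLyapunov γ h x η < 5 / 4 * supLyapunov γ h x ξ := by
  have hW := (H.continuous_supLyapunov hf hh hB).tendsto ξ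
  have hnear := (hW.eventually_const_lt (by linarith : 3 / 4 * supLyapunov γ h x ξ < _)).and
    (hW.eventually_lt_const (by linarith : _ < 5 / 4 * supLyapunov γ h x ξ))
  obtain ⟨ρ₀, hρ₀, hball⟩ := Metric.eventually_nhds_iff_ball.1 hnear
  have hC : ∀ᶠ ρ in 𝓝[>] (0 : ℝ), C * (3 * ρ) < b :=
    nhdsWithin_le_nhds <| Tendsto.eventually_lt_const hb <| by
      simpa using (by fun_prop : Continuous fun ρ : ℝ => C * (3 * ρ)).tendsto 0
  obtain ⟨ρ, hρC, hρ0, hρ⟩ := (hC.and (Ioc_mem_nhdsGT (lt_min one_pos hρ₀))).exists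
  exact ⟨ρ, hρ0, hρ.trans (min_le_left _ _), hρC.le, fun η hη =>
    hball η (Metric.ball_subset_ball (hρ.trans (min_le_right _ _)) hη)⟩

theorem exists_decreasesOn (H : OutputEstimate h x β γ)
    (hf : LocallyLipschitz fun q : EuclideanSpace ℝ (Fin n) × EuclideanSpace ℝ (Fin m) =>
      f q.1 q.2) (hh : LocallyLipschitz h) (hB : IsBIBS f x) (hξ : 0 < supLyapunov γ h x ξ) :
    ∃ N ∈ 𝓝 ξ, ∃ (L M : ℝ≥0) (b : ℝ), 0 < b ∧ DecreasesOn (supLyapunov γ h x)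
      (fun ξ => f ξ '' {μ | 8 * γ ‖μ‖ ≤ supLyapunov γ h x ξ}) N L M b := by
  set W := supLyapunov γ h x
  have hε : 0 < 5 / 8 * W ξ := by positivity
  obtain ⟨L, hL0, hL⟩ := H.exists_supLyapunov_le_add hf hh hB (‖ξ‖ + 1) hε
  obtain ⟨a, M, C, ha, hM0, hC0, hstep⟩ := H.exists_supLyapunov_add_smul_le hf hh hB (‖ξ‖ + 1) hε
  set b := 3 / 8 * W ξ * a
  have hb : 0 < b := by positivity
  obtain ⟨ρ, hρ0, hρ1, hCρ, hρ⟩ := H.exists_supLyapunov_near hf hh hB hξ C hb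
  have hR : ∀ η ∈ Metric.ball ξ ρ, ‖η‖ ≤ ‖ξ‖ + 1 := fun η hη => by
    linarith [norm_le_norm_add_norm_sub' η ξ, mem_ball_iff_norm.1 hη]
  refine ⟨Metric.ball ξ ρ, Metric.ball_mem_nhds ξ hρ0, ⟨L, hL0⟩, ⟨M, hM0⟩, b, hb, ?_, ?_, ?_⟩
  · refine .of_le_add_mul _ fun η hη ζ hζ => ?_
    have hmax : max (W ζ) (5 / 8 * W ξ) = W ζ := max_eq_left (by linarith [(hρ ζ hζ).1])
    rw [dist_eq_norm, ← hmax]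
    exact hL η ζ (hR η hη) (hR ζ hζ)
  · rintro η hη _ ⟨μ, hμ : 8 * γ ‖μ‖ ≤ W η, rfl⟩
    exact (hstep η η μ (hR η hη) (hR η hη) (by linarith [(hρ η hη).2])).1
  · rintro η hη _ ⟨μ, hμ : 8 * γ ‖μ‖ ≤ W η, rfl⟩
    have hsmall : ∀ c e : ℝ, 0 < e → ∀ᶠ s in 𝓝[>] (0 : ℝ), c * s < e := fun c e he =>
      nhdsWithin_le_nhds <| Tendsto.eventually_lt_const he <| by
        simpa using (continuous_const_mul c).tendsto 0
    filter_upwards [self_mem_nhdsWithin, hsmall 1 1 one_pos, hsmall M ρ hρ0,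
      hsmall a (1 / 6) (by norm_num)] with s (hs : 0 < s) hs1 hsM hsa ζ hζ
    have hle := (hstep η ζ μ (hR η hη) (hR ζ hζ) (by linarith [(hρ η hη).2])).2 s hs.le
      (by linarith) (by linarith)
    have hζη : ‖ζ - η‖ ≤ 2 * ρ := by
      linarith [norm_sub_le_norm_sub_add_norm_sub ζ ξ η, mem_ball_iff_norm.1 hζ,
        mem_ball_iff_norm'.1 hη]
    have herr : C * (M * s + ‖ζ - η‖) * s ≤ b * s := by
      refine mul_le_mul_of_nonneg_right (le_trans ?_ hCρ) hs.le
      gcongr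
      linarith
    have hdecay := max_mul_one_sub_le hξ.le (hρ ζ hζ).1.le (mul_pos ha hs).le hsa.le
    have hb' : 3 / 4 * W ξ * (a * s) = 2 * (b * s) := by ring
    linarith

end OutputEstimate

end SupLyapunov

/-! ### Smooth reparametrization across the zero set -/

/-- A smooth monotone function that vanishes up to `ε` and is eventually the identity. -/
def thresholdFun (ε v : ℝ) : ℝ := v * Real.smoothTransition (v - ε)

section Threshold

variable {ε v : ℝ}

theorem contDiff_thresholdFun (ε : ℝ) : ContDiff ℝ (⊤ : ℕ∞) (thresholdFun ε) :=
  contDiff_id.mul (Real.smoothTransition.contDiff.comp (contDiff_id.sub contDiff_const))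

theorem thresholdFun_eq_zero (h : v ≤ ε) : thresholdFun ε v = 0 := by
  rw [thresholdFun, Real.smoothTransition.zero_of_nonpos (by linarith), mul_zero]

theorem thresholdFun_nonneg (hε : 0 ≤ ε) : 0 ≤ thresholdFun ε v := by
  rcases le_total v ε with h | h
  · exact (thresholdFun_eq_zero h).ge
  · exact mul_nonneg (hε.trans h) (Real.smoothTransition.nonneg _)

theorem monotone_thresholdFun (hε : 0 ≤ ε) : Monotone (thresholdFun ε) := by
  intro v w hvw
  rcases le_total v ε with h | h
  · rw [thresholdFun_eq_zero h]
    exact thresholdFun_nonneg hε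
  · exact mul_le_mul hvw (Real.smoothTransition.monotone (by linarith))
      (Real.smoothTransition.nonneg _) (by linarith)

theorem thresholdFun_le_abs (ε v : ℝ) : thresholdFun ε v ≤ |v| :=
  (mul_le_mul_of_nonneg_right (le_abs_self v) (Real.smoothTransition.nonneg _)).trans
    (mul_le_of_le_one_right (abs_nonneg v) (Real.smoothTransition.le_one _))

theorem thresholdFun_eq_self (h : ε + 1 ≤ v) : thresholdFun ε v = v := by
  rw [thresholdFun, Real.smoothTransition.one_of_one_le (by linarith), mul_one]

theorem deriv_thresholdFun_pos (hε : 0 ≤ ε) (hv : ε < v) : 0 < deriv (thresholdFun ε) v := by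
  have hd : Differentiable ℝ Real.smoothTransition :=
    (Real.smoothTransition.contDiff (n := 1)).differentiable (by simp)
  have hderiv : deriv (thresholdFun ε) v =
      1 * Real.smoothTransition (v - ε) + v * deriv Real.smoothTransition (v - ε) :=
    ((hasDerivAt_id v).mul (HasDerivAt.comp_sub_const v ε (hd _).hasDerivAt)).deriv
  have hderiv_nonneg : 0 ≤ deriv Real.smoothTransition (v - ε) :=
    Real.smoothTransition.monotone.deriv_nonneg
  have hpos : 0 < Real.smoothTransition (v - ε) := Real.smoothTransition.pos_of_pos (sub_pos.2 hv)
  have hv0 : 0 < v := hε.trans_lt hv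
  rw [hderiv]
  positivity

theorem contDiff_thresholdFun_comp {E : Type*} [NormedAddCommGroup E] [NormedSpace ℝ E]
    {W g : E → ℝ} (hε : 0 < ε) (hW : Continuous W)
    (hg : ContDiffOn ℝ (⊤ : ℕ∞) g {x | 0 < W x}) (hgW : ∀ x, g x ≤ 2 * W x) :
    ContDiff ℝ (⊤ : ℕ∞) fun x => thresholdFun ε (g x) := by
  refine contDiff_iff_contDiffAt.2 fun x => ?_
  rcases lt_or_ge 0 (W x) with hx | hx
  · exact (contDiff_thresholdFun ε).contDiffAt.comp x
      (hg.contDiffAt ((isOpen_lt continuous_const hW).mem_nhds hx))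
  · refine (contDiffAt_const (c := (0 : ℝ))).congr_of_eventuallyEq ?_
    filter_upwards [hW.continuousAt.eventually_lt_const (hx.trans_lt (half_pos hε))] with y hy
    exact thresholdFun_eq_zero (by linarith [hgW y])

end Threshold

/-- A superposition of the functions `thresholdFun ε` over the thresholds `ε = 2⁻ᵏ`. -/
def thresholdSeries (a : ℕ → ℝ) (v : ℝ) : ℝ := ∑' k, a k * thresholdFun ((1 / 2) ^ k) v

section ThresholdSeries

variable {a : ℕ → ℝ} {v : ℝ}

theorem summable_thresholdSeries (ha0 : ∀ k, 0 < a k) (ha : Summable a) (v : ℝ) :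
    Summable fun k => a k * thresholdFun ((1 / 2) ^ k) v :=
  .of_nonneg_of_le (fun k => mul_nonneg (ha0 k).le (thresholdFun_nonneg (by positivity)))
    (fun k => mul_le_mul_of_nonneg_left (thresholdFun_le_abs _ v) (ha0 k).le) (ha.mul_right |v|)

theorem thresholdSeries_le (ha0 : ∀ k, 0 < a k) (ha : Summable a) (ha1 : ∑' k, a k ≤ 1)
    (hv : 0 ≤ v) : thresholdSeries a v ≤ v :=
  calc thresholdSeries a v ≤ ∑' k, a k * |v| :=
        (summable_thresholdSeries ha0 ha v).tsum_le_tsum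
          (fun k => mul_le_mul_of_nonneg_left (thresholdFun_le_abs _ v) (ha0 k).le)
          (ha.mul_right |v|)
    _ = (∑' k, a k) * v := by rw [tsum_mul_right, abs_of_nonneg hv]
    _ ≤ v := mul_le_of_le_one_left hv ha1

theorem deriv_thresholdSeries_pos (ha0 : ∀ k, 0 < a k) (ha : Summable a)
    (hd : Differentiable ℝ (thresholdSeries a)) (hv : 0 < v) :
    0 < deriv (thresholdSeries a) v := by
  obtain ⟨k, hk⟩ := exists_pow_lt_of_lt_one hv (by norm_num : (1 / 2 : ℝ) < 1)
  have hkd : Differentiable ℝ (thresholdFun ((1 / 2) ^ k)) :=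
    (contDiff_thresholdFun _).differentiable (by simp)
  have hmono : Monotone fun w => thresholdSeries a w - a k * thresholdFun ((1 / 2) ^ k) w := by
    intro w z hwz
    have hincr := le_hasSum ((summable_thresholdSeries ha0 ha z).hasSum.sub
      (summable_thresholdSeries ha0 ha w).hasSum) k fun j _ => sub_nonneg.2 <|
        mul_le_mul_of_nonneg_left (monotone_thresholdFun (by positivity) hwz) (ha0 j).le
    simp only [thresholdSeries]
    linarith
  have hderiv := hmono.deriv_nonneg (x := v)
  rw [deriv_fun_sub (hd v) ((hkd v).const_mul _), deriv_const_mul _ (hkd v)] at hderiv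
  linarith [mul_pos (ha0 k) (deriv_thresholdFun_pos (by positivity) hk)]

theorem tendsto_thresholdSeries_atTop (ha0 : ∀ k, 0 < a k) (ha : Summable a) :
    Tendsto (thresholdSeries a) atTop atTop := by
  refine tendsto_atTop_mono' atTop ?_ (tendsto_id.const_mul_atTop (ha0 0))
  filter_upwards [eventually_ge_atTop 2] with v hv
  have hle := (summable_thresholdSeries ha0 ha v).le_tsum 0 fun j _ =>
    mul_nonneg (ha0 j).le (thresholdFun_nonneg (by positivity))
  rwa [pow_zero, thresholdFun_eq_self (by linarith)] at hle

theorem isClassKInfty_thresholdSeries (ha0 : ∀ k, 0 < a k) (ha : Summable a)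
    (hd : Differentiable ℝ (thresholdSeries a)) : IsClassKInfty (thresholdSeries a) := by
  refine ⟨⟨hd.continuous.continuousOn, ?_, ?_⟩, tendsto_thresholdSeries_atTop ha0 ha⟩
  · refine strictMonoOn_of_deriv_pos (convex_Ici 0) hd.continuous.continuousOn fun v hv => ?_
    rw [interior_Ici] at hv
    exact deriv_thresholdSeries_pos ha0 ha hd hv
  · simp [thresholdSeries, thresholdFun]

theorem exists_contDiff_comp {E : Type*} [NormedAddCommGroup E] [NormedSpace ℝ E]
    [FiniteDimensional ℝ E] {W g : E → ℝ} (hW : Continuous W)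
    (hg : ContDiffOn ℝ (⊤ : ℕ∞) g {x | 0 < W x}) (hgW : ∀ x, g x ≤ 2 * W x) :
    ∃ Φ : ℝ → ℝ, Differentiable ℝ Φ ∧ ContDiff ℝ (⊤ : ℕ∞) (fun x => Φ (g x)) ∧
      IsClassKInfty Φ ∧ (∀ v, 0 ≤ v → Φ v ≤ v) ∧ ∀ v, 0 < v → 0 < deriv Φ v := by
  obtain ⟨c, hc0, hc⟩ := exists_coeff_contDiff_tsum_of_finiteDimensional
    fun k => contDiff_thresholdFun ((1 / 2) ^ k)
  obtain ⟨d, hd0, hd⟩ := exists_coeff_contDiff_tsum_of_finiteDimensional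
    fun k => contDiff_thresholdFun_comp (ε := (1 / 2) ^ k) (by positivity) hW hg hgW
  let a : ℕ → ℝ := fun k => min (min (c k) (d k)) (1 / 2 / 2 ^ k)
  have ha0 : ∀ k, 0 < a k := fun k => lt_min (lt_min (hc0 k) (hd0 k)) (by positivity)
  have hgeom := hasSum_geometric_two' 1
  have ha_le : ∀ k, a k ≤ 1 / 2 / 2 ^ k := fun k => min_le_right _ _
  have ha : Summable a := .of_nonneg_of_le (fun k => (ha0 k).le) ha_le hgeom.summable
  have ha1 : ∑' k, a k ≤ 1 := (ha.tsum_le_tsum ha_le hgeom.summable).trans hgeom.tsum_eq.le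
  have hΦ : Differentiable ℝ (thresholdSeries a) := by
    refine ContDiff.differentiable (hc a fun k => ?_) (by simp)
    rw [abs_of_pos (ha0 k)]
    exact (min_le_left _ _).trans (min_le_left _ _)
  refine ⟨thresholdSeries a, hΦ, hd a fun k => ?_, isClassKInfty_thresholdSeries ha0 ha hΦ,
    fun v => thresholdSeries_le ha0 ha ha1, fun v => deriv_thresholdSeries_pos ha0 ha hΦ⟩
  rw [abs_of_pos (ha0 k)]
  exact (min_le_left _ _).trans (min_le_right _ _)

end ThresholdSeries

/-! ### The converse Lyapunov theorem -/

theorem fderiv_comp_neg {E : Type*} [NormedAddCommGroup E] [NormedSpace ℝ E] {Φ : ℝ → ℝ}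
    {g : E → ℝ} {x v : E} (hΦ : DifferentiableAt ℝ Φ (g x)) (hg : DifferentiableAt ℝ g x)
    (hΦ' : 0 < deriv Φ (g x)) (hg' : fderiv ℝ g x v < 0) :
    fderiv ℝ (fun y => Φ (g y)) x v < 0 := by
  have hcomp : HasFDerivAt (fun y => Φ (g y)) (deriv Φ (g x) • fderiv ℝ g x) x :=
    hΦ.hasDerivAt.comp_hasFDerivAt x hg.hasFDerivAt
  rw [hcomp.fderiv]
  exact mul_neg_of_pos_of_neg hΦ' hg'

section Necessity

variable {n m p : ℕ}
  {f : EuclideanSpace ℝ (Fin n) → EuclideanSpace ℝ (Fin m) → EuclideanSpace ℝ (Fin n)}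
  {h : EuclideanSpace ℝ (Fin n) → EuclideanSpace ℝ (Fin p)}
  {x : ℝ → EuclideanSpace ℝ (Fin n) → (ℝ → EuclideanSpace ℝ (Fin m)) → EuclideanSpace ℝ (Fin n)}

theorem IsIOS.exists_lyapunov (hI : IsIOS h x)
    (hf : LocallyLipschitz fun q : EuclideanSpace ℝ (Fin n) × EuclideanSpace ℝ (Fin m) =>
      f q.1 q.2) (hh : LocallyLipschitz h) (hB : IsBIBS f x) :
    ∃ (V : EuclideanSpace ℝ (Fin n) → ℝ) (α₁ α₂ χ : ℝ → ℝ),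
      ContDiff ℝ (⊤ : ℕ∞) V ∧ (∀ ξ, 0 ≤ V ξ) ∧
      IsClassKInfty α₁ ∧ IsClassKInfty α₂ ∧ IsClassK χ ∧
      (∀ ξ, α₁ ‖h ξ‖ ≤ V ξ ∧ V ξ ≤ α₂ ‖ξ‖) ∧
      (∀ ξ μ, χ ‖μ‖ < V ξ → fderiv ℝ V ξ (f ξ μ) < 0) := by
  obtain ⟨β, γ, H⟩ := hI.exists_outputEstimate
  have hWh := H.norm_le_supLyapunov hB.1
  have hWβ := H.supLyapunov_le_beta
  have hW := H.continuous_supLyapunov hf hh hB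
  obtain ⟨g, hg, hgW, hgdec⟩ := exists_contDiffOn_fderiv_neg hW (H.supLyapunov_nonneg hB.1)
    fun ξ => H.exists_decreasesOn hf hh hB
  obtain ⟨Φ, hΦd, hΦg, hΦK, hΦle, hΦderiv⟩ := exists_contDiff_comp hW hg fun ξ => (hgW ξ).2
  have hhg : ∀ ξ, ‖h ξ‖ / 2 ≤ g ξ := fun ξ => by linarith [(hgW ξ).1, hWh ξ]
  have hg0 : ∀ ξ, 0 ≤ g ξ := fun ξ => (by positivity : 0 ≤ ‖h ξ‖ / 2).trans (hhg ξ)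
  refine ⟨fun ξ => Φ (g ξ), fun s => Φ (s / 2), fun s => 4 * β s 0 + s, fun s => 16 * γ s,
    hΦg, fun ξ => hΦK.1.nonneg (hg0 ξ), ⟨hΦK.1.comp ?_, ?_⟩,
    ((H.isClassKL.1 0 self_mem_Ici).const_mul four_pos).add_id,
    H.isClassK.const_mul (by norm_num), fun ξ => ⟨?_, ?_⟩, fun ξ μ (hμ : _ < Φ (g ξ)) => ?_⟩
  · simpa [div_eq_inv_mul] using isClassK_id.const_mul (c := (2 : ℝ)⁻¹) (by norm_num)
  · exact hΦK.2.comp (tendsto_id.atTop_div_const two_pos)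
  · exact hΦK.1.mono (by positivity) (hhg ξ)
  · linarith [hΦle _ (hg0 ξ), (hgW ξ).2, hWβ ξ, norm_nonneg ξ]
  · have hγ : 0 ≤ γ ‖μ‖ := H.isClassK.nonneg (norm_nonneg μ)
    have hγg : 16 * γ ‖μ‖ < g ξ := hμ.trans_le (hΦle _ (hg0 ξ))
    have hξ : 0 < supLyapunov γ h x ξ := by linarith [(hgW ξ).2]
    have hgd : DifferentiableAt ℝ g ξ := (hg.contDiffAt
      ((isOpen_lt continuous_const hW).mem_nhds hξ)).differentiableAt (by simp)
    refine fderiv_comp_neg (hΦd _) hgd (hΦderiv _ (by linarith)) (hgdec ξ hξ _ ⟨μ, ?_, rfl⟩)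
    rw [mem_ofPred_eq]
    linarith [(hgW ξ).2]

end Necessity

/-- A BIBS system is IOS if and only if there exist a smooth `V`, class-`K∞` functions
`α₁, α₂` and a class-`K` function `χ` with `α₁(|h(ξ)|) ≤ V(ξ) ≤ α₂(|ξ|)` and such that
`V(ξ) > χ(|μ|)` implies `∇V(ξ)·f(ξ,μ) < 0`. -/
theorem ios_iff_exists_strictDecayLyapunov {n m p : ℕ}
    (f : EuclideanSpace ℝ (Fin n) → EuclideanSpace ℝ (Fin m) → EuclideanSpace ℝ (Fin n))
    (h : EuclideanSpace ℝ (Fin n) → EuclideanSpace ℝ (Fin p))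
    (x : ℝ → EuclideanSpace ℝ (Fin n) → (ℝ → EuclideanSpace ℝ (Fin m)) →
      EuclideanSpace ℝ (Fin n))
    (hf : LocallyLipschitz fun q : EuclideanSpace ℝ (Fin n) × EuclideanSpace ℝ (Fin m) =>
      f q.1 q.2)
    (hf0 : f 0 0 = 0)
    (hh : LocallyLipschitz h) (hh0 : h 0 = 0)
    (hBIBS : IsBIBS f x) :
    IsIOS h x ↔
      ∃ (V : EuclideanSpace ℝ (Fin n) → ℝ) (α₁ α₂ χ : ℝ → ℝ),
        ContDiff ℝ (⊤:ℕ∞) V ∧ (∀ ξ, 0 ≤ V ξ) ∧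
        IsClassKInfty α₁ ∧ IsClassKInfty α₂ ∧ IsClassK χ ∧
        (∀ ξ, α₁ ‖h ξ‖ ≤ V ξ ∧ V ξ ≤ α₂ ‖ξ‖) ∧
        (∀ ξ μ, χ ‖μ‖ < V ξ → fderiv ℝ V ξ (f ξ μ) < 0) := by
  refine ⟨fun hI => hI.exists_lyapunov hf hh hBIBS, ?_⟩
  rintro ⟨V, α₁, α₂, χ, hV, -, hα₁, hα₂, hχ, hbd, hdec⟩
  exact isIOS_of_lyapunov hBIBS hf.continuous (hV.of_le (by exact_mod_cast le_top)) hα₁ hα₂.1 hχ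
    (fun ξ => (hbd ξ).1) (fun ξ => (hbd ξ).2) hdec
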